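/- arXiv:2209.03510 — 4 statements merged into one kernel-verified Lean document; each statement's English description precedes it below -/
import Mathlib

section
/- Let D be a bounded domain in ℂⁿ and p > 0. Define the p-Bergman kernel B_{D,p}(z) := sup_{φ ∈ A^p(D), φ ≠ 0} |φ(z)|² / ‖φ‖_p². Then B_{D,p} is a continuous function on D. -/
open MeasureTheory

noncomputable def apNorm (n : ℕ) (p : ℝ) (D : Set (Fin n → ℂ))
    (φ : (Fin n → ℂ) → ℂ) : ℝ :=
  (∫ z in D, ‖φ z‖ ^ p) ^ (1 / p)

def MemAp (n : ℕ) (p : ℝ) (D : Set (Fin n → ℂ)) (φ : (Fin n → ℂ) → ℂ) : Prop :=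
  DifferentiableOn ℂ φ D ∧ IntegrableOn (fun z => ‖φ z‖ ^ p) D volume

/-- The `p`-Bergman kernel `B_{D,p}(z) = sup {‖φ(z)‖² / ‖φ‖_p² : φ ∈ A^p(D), φ ≠ 0}`. -/
noncomputable def pBergman (n : ℕ) (p : ℝ) (D : Set (Fin n → ℂ))
    (z : Fin n → ℂ) : ℝ :=
  sSup {x : ℝ | ∃ φ : (Fin n → ℂ) → ℂ, MemAp n p D φ ∧ (∃ w ∈ D, φ w ≠ 0) ∧
    x = ‖φ z‖ ^ 2 / (apNorm n p D φ) ^ 2}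

/-!
A quasi sub-mean value inequality `‖φ z‖ᵖ vol (B(z, R)) ≤ c ∫_{B(z, R)} ‖φ‖ᵖ`, valid for every
`p > 0`, shows that the functions `φ / ‖φ‖_p` are locally uniformly bounded. By the Schwarz lemma
they are then equicontinuous at every point, and so is the family of their moduli. The supremum
of a pointwise bounded equicontinuous family is continuous, and the kernel is the square of this
supremum.

To get the inequality without subharmonicity of `‖φ‖ᵖ`, pick a point `a` maximizing
`(R - |x - z|) ^ N * ‖φ x‖ᵖ`, where `N` is the real dimension. On a ball around `a` of radius
comparable to `R - |a - z|` the function is at most a constant times `‖φ a‖`, so the Schwarz lemma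
keeps it above `‖φ a‖ / 2` on a comparable smaller ball, and integrating there suffices.
-/

open Metric Set

section Supremum

variable {ι X : Type*}

lemma dist_iSup_le {f g : ι → ℝ} {ε : ℝ} (hε : 0 ≤ ε) (hf : BddAbove (range f))
    (h : ∀ i, dist (f i) (g i) ≤ ε) : dist (⨆ i, f i) (⨆ i, g i) ≤ ε := by
  cases isEmpty_or_nonempty ι
  · simpa only [Real.iSup_of_isEmpty, dist_self] using hε
  have hfg (i : ι) : f i ≤ g i + ε ∧ g i ≤ f i + ε := by
    have := abs_le.1 (h i)
    constructor <;> linarith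
  have hgf (i : ι) : g i ≤ (⨆ i, f i) + ε := (hfg i).2.trans (by gcongr; exact le_ciSup hf i)
  have hg : BddAbove (range g) := ⟨_, forall_mem_range.2 hgf⟩
  have hle : ⨆ i, f i ≤ (⨆ i, g i) + ε :=
    ciSup_le fun i ↦ (hfg i).1.trans (by gcongr; exact le_ciSup hg i)
  have hge : ⨆ i, g i ≤ (⨆ i, f i) + ε := ciSup_le hgf
  rw [Real.dist_eq, abs_le]
  constructor <;> linarith

lemma continuousAt_iSup_of_equicontinuousAt [TopologicalSpace X] {F : ι → X → ℝ} {x₀ : X}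
    (hF : EquicontinuousAt F x₀) (hbdd : BddAbove (range fun i ↦ F i x₀)) :
    ContinuousAt (fun x ↦ ⨆ i, F i x) x₀ := by
  refine Metric.tendsto_nhds.2 fun ε hε ↦ ?_
  filter_upwards [Metric.equicontinuousAt_iff_right.1 hF (ε / 2) (half_pos hε)] with x hx
  rw [dist_comm]
  exact (dist_iSup_le (half_pos hε).le hbdd fun i ↦ (hx i).le).trans_lt (half_lt_self hε)

end Supremum

lemma le_rpow_div_mul_of_rpow_le_pow_mul_rpow {x y b p : ℝ} {m : ℕ} (hb : 0 ≤ b) (hx : 0 ≤ x)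
    (hy : 0 ≤ y) (hp : 0 < p) (h : x ^ p ≤ b ^ m * y ^ p) : x ≤ b ^ (m / p) * y := by
  have hbp : (b ^ (m / p)) ^ p = b ^ m := by
    rw [← Real.rpow_mul hb, div_mul_cancel₀ _ hp.ne', Real.rpow_natCast]
  rwa [← Real.rpow_le_rpow_iff hx (by positivity) hp, Real.mul_rpow (by positivity) hy, hbp]

lemma exists_ball_subset_forall_le_two_pow_mul {X : Type*} [PseudoMetricSpace X] [ProperSpace X]
    {u : X → ℝ} {x₀ : X} {R : ℝ} (hR : 0 ≤ R) (hu : ContinuousOn u (closedBall x₀ R))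
    (hu₀ : ∀ x ∈ closedBall x₀ R, 0 ≤ u x) (m : ℕ) :
    ∃ a, ∃ d ≥ 0, ball a d ⊆ ball x₀ R ∧ (∀ x ∈ ball a d, u x ≤ 2 ^ m * u a) ∧
      R ^ m * u x₀ ≤ (2 * d) ^ m * u a := by
  obtain ⟨a, ha, hmax⟩ := (isCompact_closedBall x₀ R).exists_isMaxOn ⟨x₀, mem_closedBall_self hR⟩
    (f := fun x ↦ (R - dist x x₀) ^ m * u x) (by fun_prop)
  obtain ⟨d, hd⟩ : ∃ d, R - dist a x₀ = 2 * d := ⟨(R - dist a x₀) / 2, by ring⟩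
  have ha' : dist a x₀ ≤ R := ha
  have hweight {x : X} (hx : x ∈ ball a d) : d < R - dist x x₀ := by
    have := dist_triangle x a x₀
    have := mem_ball.1 hx
    linarith
  have hsub : ball a d ⊆ ball x₀ R := fun x hx ↦ by
    have := hweight hx
    have := dist_nonneg.trans_lt (mem_ball.1 hx)
    rw [mem_ball]
    linarith
  refine ⟨a, d, by linarith, hsub, fun x hx ↦ ?_, ?_⟩
  · have hd₀ : 0 < d := dist_nonneg.trans_lt (mem_ball.1 hx)
    have hxR := ball_subset_closedBall (hsub hx)
    refine le_of_mul_le_mul_left ?_ (pow_pos hd₀ m)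
    calc d ^ m * u x ≤ (R - dist x x₀) ^ m * u x := by
          have := hu₀ x hxR
          have := (hweight hx).le
          gcongr
      _ ≤ (R - dist a x₀) ^ m * u a := hmax hxR
      _ = d ^ m * (2 ^ m * u a) := by rw [hd]; ring
  · calc R ^ m * u x₀ = (R - dist x₀ x₀) ^ m * u x₀ := by rw [dist_self, sub_zero]
      _ ≤ (R - dist a x₀) ^ m * u a := hmax (mem_closedBall_self hR)
      _ = (2 * d) ^ m * u a := by rw [hd]

section Holomorphic

variable {E F : Type*} [NormedAddCommGroup E] [NormedSpace ℂ E]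
  [NormedAddCommGroup F] [NormedSpace ℂ F]

lemma dist_le_div_mul_dist_of_forall_norm_le {f : E → F} {c z : E} {r M : ℝ}
    (hf : DifferentiableOn ℂ f (ball c r)) (hM : ∀ w ∈ ball c r, ‖f w‖ ≤ M) (hz : z ∈ ball c r) :
    dist (f z) (f c) ≤ (M + ‖f c‖) / r * dist z c := by
  refine Complex.dist_le_div_mul_dist_of_mapsTo_ball hf (fun w hw ↦ ?_) hz
  rw [mem_closedBall, dist_eq_norm]
  exact (norm_sub_le _ _).trans (by gcongr; exact hM w hw)

lemma equicontinuousAt_of_forall_norm_le {ι : Type*} {f : ι → E → F} {c : E} {r M : ℝ}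
    (hr : 0 < r) (hf : ∀ i, DifferentiableOn ℂ (f i) (ball c r))
    (hM : ∀ i, ∀ z ∈ ball c r, ‖f i z‖ ≤ M) : EquicontinuousAt f c := by
  refine Metric.equicontinuousAt_of_continuity_modulus (fun z ↦ (M + M) / r * dist z c) ?_ f ?_
  · exact (by fun_prop : Continuous fun z ↦ (M + M) / r * dist z c).tendsto' _ _ (by simp)
  · filter_upwards [ball_mem_nhds c hr] with z hz i
    rw [dist_comm]
    refine (dist_le_div_mul_dist_of_forall_norm_le (hf i) (hM i) hz).trans ?_
    gcongr
    exact hM i c (mem_ball_self hr)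

lemma half_norm_le_of_forall_norm_le_mul {f : E → F} {a z : E} {d K : ℝ} (hK : 0 ≤ K)
    (hf : DifferentiableOn ℂ f (ball a d)) (hfK : ∀ w ∈ ball a d, ‖f w‖ ≤ K * ‖f a‖)
    (hz : z ∈ ball a (d / (2 * (K + 1)))) : ‖f a‖ / 2 ≤ ‖f z‖ := by
  have hd : 0 < d := (div_pos_iff_of_pos_right (by positivity)).1 (dist_nonneg.trans_lt hz)
  have hzd : z ∈ ball a d := ball_subset_ball (div_le_self hd.le (by linarith)) hz
  have hdist : dist (f a) (f z) ≤ ‖f a‖ / 2 := by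
    calc dist (f a) (f z) = dist (f z) (f a) := dist_comm _ _
      _ ≤ (K * ‖f a‖ + ‖f a‖) / d * dist z a := dist_le_div_mul_dist_of_forall_norm_le hf hfK hzd
      _ ≤ (K * ‖f a‖ + ‖f a‖) / d * (d / (2 * (K + 1))) := by gcongr; exact (mem_ball.1 hz).le
      _ = ‖f a‖ / 2 := by field_simp
  have := norm_sub_norm_le (f a) (f z)
  rw [← dist_eq_norm] at this
  linarith

variable [MeasurableSpace E] {μ : Measure E}

lemma half_norm_rpow_mul_measureReal_ball_le [OpensMeasurableSpace E] [ProperSpace E]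
    [IsFiniteMeasureOnCompacts μ] {f : E → F} {a : E} {s : Set E} {d K p : ℝ} (hd : 0 ≤ d)
    (hK : 0 ≤ K) (hp : 0 ≤ p) (hf : DifferentiableOn ℂ f (ball a d))
    (hfK : ∀ w ∈ ball a d, ‖f w‖ ≤ K * ‖f a‖) (hs : ball a d ⊆ s)
    (hint : IntegrableOn (fun z ↦ ‖f z‖ ^ p) s μ) :
    (‖f a‖ / 2) ^ p * μ.real (ball a (d / (2 * (K + 1)))) ≤ ∫ z in s, ‖f z‖ ^ p ∂μ := by
  have hsub : ball a (d / (2 * (K + 1))) ⊆ s :=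
    (ball_subset_ball (div_le_self hd (by linarith))).trans hs
  have hlower : ∀ z ∈ ball a (d / (2 * (K + 1))), (‖f a‖ / 2) ^ p ≤ ‖f z‖ ^ p := fun z hz ↦ by
    have := half_norm_le_of_forall_norm_le_mul hK hf hfK hz
    gcongr
  calc (‖f a‖ / 2) ^ p * μ.real (ball a (d / (2 * (K + 1))))
      ≤ ∫ z in ball a (d / (2 * (K + 1))), ‖f z‖ ^ p ∂μ :=
        setIntegral_ge_of_const_le_real measurableSet_ball measure_ball_lt_top.ne hlower
          (hint.mono_set hsub)
    _ ≤ ∫ z in s, ‖f z‖ ^ p ∂μ :=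
        setIntegral_mono_set hint (.of_forall fun z ↦ by positivity) hsub.eventuallyLE

end Holomorphic

section PointEvaluation

lemma measureReal_ball_eq_pow_mul {E : Type*} [NormedAddCommGroup E] [NormedSpace ℝ E]
    [FiniteDimensional ℝ E] [Nontrivial E] [MeasurableSpace E] [BorelSpace E] (μ : Measure E)
    [μ.IsAddHaarMeasure] (x : E) {r : ℝ} (hr : 0 ≤ r) :
    μ.real (ball x r) = r ^ Module.finrank ℝ E * μ.real (ball 0 1) := by
  rw [← Measure.addHaar_real_closedBall_eq_addHaar_real_ball μ x,
    Measure.addHaar_real_closedBall μ x hr]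

/-- The constant in the quasi sub-mean value inequality for `‖f‖ ^ p` with `f` holomorphic, on a
space of real dimension `N`. With `K = 2 ^ (N / p)` bounding `‖f‖ / ‖f a‖` on the ball of radius `d`
around the maximizing point `a`, the factors come from `‖f a‖ = 2 * (‖f a‖ / 2)` and
`2 * d = 4 * (K + 1) * (d / (2 * (K + 1)))`. -/
noncomputable def subMeanConst (N : ℕ) (p : ℝ) : ℝ :=
  2 ^ p * (4 * (2 ^ (N / p) + 1)) ^ N

lemma subMeanConst_nonneg (N : ℕ) (p : ℝ) : 0 ≤ subMeanConst N p := by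
  unfold subMeanConst
  positivity

variable {E F : Type*} [NormedAddCommGroup E] [NormedSpace ℂ E] [FiniteDimensional ℂ E]
  [Nontrivial E] [MeasurableSpace E] [BorelSpace E] [NormedAddCommGroup F] [NormedSpace ℂ F]
  (μ : Measure E) [μ.IsAddHaarMeasure] {p : ℝ}

theorem norm_rpow_mul_measureReal_ball_le (hp : 0 < p) {f : E → F} {x : E} {R : ℝ} (hR : 0 < R)
    (hf : DiffContOnCl ℂ f (ball x R)) :
    ‖f x‖ ^ p * μ.real (ball x R) ≤
      subMeanConst (Module.finrank ℝ E) p * ∫ z in ball x R, ‖f z‖ ^ p ∂μ := by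
  have : ProperSpace E := FiniteDimensional.proper ℂ E
  set N := Module.finrank ℝ E
  set K : ℝ := 2 ^ (N / p)
  have hcont : ContinuousOn (fun z ↦ ‖f z‖ ^ p) (closedBall x R) :=
    hf.continuousOn_ball.norm.rpow_const fun _ _ ↦ .inr hp.le
  obtain ⟨a, d, hd, hsub, hdouble, hcenter⟩ := exists_ball_subset_forall_le_two_pow_mul hR.le hcont
    (fun z _ ↦ by positivity) N
  have hnorm : ∀ z ∈ ball a d, ‖f z‖ ≤ K * ‖f a‖ := fun z hz ↦
    le_rpow_div_mul_of_rpow_le_pow_mul_rpow zero_le_two (norm_nonneg _) (norm_nonneg _) hp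
      (hdouble z hz)
  have hint : IntegrableOn (fun z ↦ ‖f z‖ ^ p) (ball x R) μ :=
    (hcont.integrableOn_compact (isCompact_closedBall x R)).mono_set ball_subset_closedBall
  have hlower := half_norm_rpow_mul_measureReal_ball_le hd (by positivity) hp.le
    (hf.differentiableOn.mono hsub) hnorm hsub hint
  set V := μ.real (ball (0 : E) 1)
  calc ‖f x‖ ^ p * μ.real (ball x R) = R ^ N * ‖f x‖ ^ p * V := by
        rw [measureReal_ball_eq_pow_mul μ x hR.le]; ring
    _ ≤ (2 * d) ^ N * ‖f a‖ ^ p * V := by gcongr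
    _ = subMeanConst N p * ((‖f a‖ / 2) ^ p * ((d / (2 * (K + 1))) ^ N * V)) := by
        have hd' : 2 * d = 4 * (K + 1) * (d / (2 * (K + 1))) := by
          have : K + 1 ≠ 0 := by positivity
          field_simp
          ring
        have hhalf : ‖f a‖ ^ p = 2 ^ p * (‖f a‖ / 2) ^ p := by
          rw [← Real.mul_rpow zero_le_two (by positivity), mul_div_cancel₀ _ two_ne_zero]
        rw [subMeanConst, hd', mul_pow _ (d / _), hhalf]
        ring
    _ ≤ subMeanConst N p * ∫ z in ball x R, ‖f z‖ ^ p ∂μ := by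
        rw [measureReal_ball_eq_pow_mul μ a (by positivity)] at hlower
        exact mul_le_mul_of_nonneg_left hlower (subMeanConst_nonneg N p)

theorem exists_forall_mem_ball_norm_le_mul_setIntegral_rpow (hp : 0 < p) {D : Set E}
    (hD : IsOpen D) {z₀ : E} (hz₀ : z₀ ∈ D) :
    ∃ C, 0 ≤ C ∧ ∃ r > 0, ball z₀ r ⊆ D ∧ ∀ f : E → F, DifferentiableOn ℂ f D →
      IntegrableOn (fun z ↦ ‖f z‖ ^ p) D μ →
      ∀ z ∈ ball z₀ r, ‖f z‖ ≤ C * (∫ w in D, ‖f w‖ ^ p ∂μ) ^ (1 / p) := by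
  obtain ⟨R, hR, hRD⟩ := Metric.isOpen_iff.1 hD z₀ hz₀
  set r := R / 3
  have hr : 0 < r := by positivity
  set c := subMeanConst (Module.finrank ℝ E) p
  have hc : 0 ≤ c := subMeanConst_nonneg _ p
  set V := μ.real (ball z₀ r)
  have hV : 0 < V := ENNReal.toReal_pos (measure_ball_pos μ z₀ hr).ne' measure_ball_lt_top.ne
  refine ⟨(c / V) ^ (1 / p), by positivity, r, hr, (ball_subset_ball (by grind)).trans hRD,
    fun f hf hint z hz ↦ ?_⟩
  have hzD : closedBall z r ⊆ D := by
    refine (closedBall_subset_ball' ?_).trans hRD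
    grind [mem_ball]
  have hmean : ‖f z‖ ^ p * V ≤ c * ∫ w in D, ‖f w‖ ^ p ∂μ := by
    calc ‖f z‖ ^ p * V = ‖f z‖ ^ p * μ.real (ball z r) := by
          rw [measureReal_ball_eq_pow_mul μ z hr.le, ← measureReal_ball_eq_pow_mul μ z₀ hr.le]
      _ ≤ c * ∫ w in ball z r, ‖f w‖ ^ p ∂μ :=
          norm_rpow_mul_measureReal_ball_le μ hp hr (hf.diffContOnCl_ball hzD)
      _ ≤ c * ∫ w in D, ‖f w‖ ^ p ∂μ := by
          gcongr ?_ * ?_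
          exact setIntegral_mono_set hint (.of_forall fun w ↦ by positivity)
            (ball_subset_closedBall.trans hzD).eventuallyLE
  have hI : 0 ≤ ∫ w in D, ‖f w‖ ^ p ∂μ := integral_nonneg fun w ↦ by positivity
  rw [← Real.mul_rpow (by positivity) hI, one_div, Real.le_rpow_inv_iff_of_pos (norm_nonneg _)
    (by positivity) hp, div_mul_eq_mul_div, le_div_iff₀ hV]
  exact hmean

end PointEvaluation

section BergmanKernel

variable {n : ℕ} {p : ℝ} {D : Set (Fin n → ℂ)}

/-- The competitors in the supremum defining the `p`-Bergman kernel: the elements of `A^p(D)` that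
do not vanish identically on `D`. -/
def nonzeroAp (n : ℕ) (p : ℝ) (D : Set (Fin n → ℂ)) : Set ((Fin n → ℂ) → ℂ) :=
  {φ | MemAp n p D φ ∧ ∃ w ∈ D, φ w ≠ 0}

/-- The normalization `φ / ‖φ‖_p` of `φ` (the zero function if `‖φ‖_p = 0`). The normalizations
form the locally bounded family whose moduli have supremum `√B_{D,p}`. -/
noncomputable def apNormalize (n : ℕ) (p : ℝ) (D : Set (Fin n → ℂ)) (φ : (Fin n → ℂ) → ℂ) :
    (Fin n → ℂ) → ℂ :=
  (apNorm n p D φ)⁻¹ • φ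

lemma pBergman_eq_sq_iSup_norm_apNormalize (n : ℕ) (p : ℝ) (D : Set (Fin n → ℂ))
    (z : Fin n → ℂ) :
    pBergman n p D z = (⨆ φ : nonzeroAp n p D, ‖apNormalize n p D φ z‖) ^ 2 := by
  rw [Real.iSup_pow_of_ne_zero (fun _ ↦ norm_nonneg _) two_ne_zero, pBergman, iSup]
  congr 1
  ext x
  simp only [nonzeroAp, apNormalize, mem_ofPred_eq, mem_range, Subtype.exists, Pi.smul_apply,
    norm_smul, norm_inv, Real.norm_eq_abs, inv_mul_eq_div, div_pow, sq_abs, exists_prop, and_assoc,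
    eq_comm]

lemma MemAp.differentiableOn_apNormalize {φ : (Fin n → ℂ) → ℂ} (hφ : MemAp n p D φ) :
    DifferentiableOn ℂ (apNormalize n p D φ) D :=
  hφ.1.const_smul _

lemma exists_forall_mem_ball_norm_apNormalize_le [NeZero n] (hD : IsOpen D) (hp : 0 < p)
    {z₀ : Fin n → ℂ} (hz₀ : z₀ ∈ D) :
    ∃ C, ∃ r > 0, ball z₀ r ⊆ D ∧ ∀ φ, MemAp n p D φ →
      ∀ z ∈ ball z₀ r, ‖apNormalize n p D φ z‖ ≤ C := by
  obtain ⟨C, hC, r, hr, hrD, hbound⟩ :=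
    exists_forall_mem_ball_norm_le_mul_setIntegral_rpow (F := ℂ) volume hp hD hz₀
  refine ⟨C, r, hr, hrD, fun φ hφ z hz ↦ ?_⟩
  have hA : 0 ≤ apNorm n p D φ :=
    Real.rpow_nonneg (integral_nonneg fun z ↦ by positivity) _
  rw [apNormalize, Pi.smul_apply, norm_smul, norm_inv, Real.norm_of_nonneg hA, inv_mul_eq_div]
  exact div_le_of_le_mul₀ hA hC (hbound φ hφ.1 hφ.2 z hz)

theorem pBergman_continuous_general (n : ℕ) (D : Set (Fin n → ℂ)) (hD : IsOpen D) (p : ℝ)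
    (hp : 0 < p) : ContinuousOn (pBergman n p D) D := by
  rcases eq_zero_or_neZero n with rfl | _
  · exact (subsingleton_of_subsingleton (s := D)).continuousOn _
  intro z₀ hz₀
  obtain ⟨C, r, hr, hrD, hbound⟩ := exists_forall_mem_ball_norm_apNormalize_le hD hp hz₀
  have hequi : EquicontinuousAt (fun φ : nonzeroAp n p D ↦ apNormalize n p D φ) z₀ :=
    equicontinuousAt_of_forall_norm_le hr
      (fun φ ↦ φ.2.1.differentiableOn_apNormalize.mono hrD) fun φ ↦ hbound φ φ.2.1
  have hnorm : EquicontinuousAt (fun (φ : nonzeroAp n p D) z ↦ ‖apNormalize n p D φ z‖) z₀ :=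
    fun U hU ↦ hequi _ (uniformContinuous_norm hU)
  have hbdd : BddAbove (range fun φ : nonzeroAp n p D ↦ ‖apNormalize n p D φ z₀‖) :=
    ⟨C, forall_mem_range.2 fun φ ↦ hbound φ φ.2.1 z₀ (mem_ball_self hr)⟩
  rw [funext (pBergman_eq_sq_iSup_norm_apNormalize n p D)]
  exact ((continuousAt_iSup_of_equicontinuousAt hnorm hbdd).pow 2).continuousWithinAt

end BergmanKernel

/-- For a bounded domain `D ⊆ ℂⁿ` and `p > 0`, the `p`-Bergman kernel
is a continuous function on `D`. -/
theorem pBergman_continuous (n : ℕ) (D : Set (Fin n → ℂ))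
    (hD : IsOpen D) (hDc : IsConnected D) (hDb : Bornology.IsBounded D)
    (p : ℝ) (hp : 0 < p) :
    ContinuousOn (pBergman n p D) D := by
  exact pBergman_continuous_general n D hD p hp
end

section
/- Let μ, ν be finite positive measures on sets M, N, let 0 < p < ∞ with p not an even integer, and let f ∈ L^p(M,μ), g ∈ L^p(N,ν) satisfy ∫_M |1 + αf|^p dμ = ∫_N |1 + αg|^p dν for all α ∈ ℂ. Then f and g are equimeasurable: for every nonnegative Borel function u : ℂ → ℝ, ∫_M u(f) dμ = ∫_N u(g) dν. -/
open MeasureTheory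

/-!
On a finite-dimensional Euclidean space `E`, the potential `w ↦ ∫ ‖w - z‖ ^ p ∂μ` is formally the
convolution of `μ` with `‖·‖ ^ p`, whose Fourier transform is a nonzero multiple of
`‖t‖ ^ (-p - dim E)` away from the origin, so the potential should determine `μ`. To avoid
distributions, replace `‖·‖ ^ p` by an iterated difference `Δ_[h]^m ‖·‖ ^ p`, which is
`O(‖v‖ ^ (p - m))` at infinity, hence integrable for large `m`. The Fourier transform of the
differenced potential is then the characteristic function of `μ` times that of the kernel.

If the latter vanished at one `t ≠ 0` for every step `h`, homogeneity and invariance under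
isometries would make it vanish at every nonzero frequency, and Fourier inversion would give
`Δ_[h]^m ‖·‖ ^ p = 0`. Restricted to a line, this relation expresses `|x| ^ p` near `0` through its
values near `1, …, m`, so `|x| ^ p` would be analytic at `0`, which happens only for even integers
`p`. Rudin's hypothesis enters through `‖w - z‖ ^ p = ‖w‖ ^ p * ‖1 - w⁻¹ * z‖ ^ p`.
-/

section

open Asymptotics Filter Topology
open scoped fwdDiff FourierTransform

section ForwardDifference

lemma fwdDiff_iter_congr {M M' G : Type*} [AddCommMonoid M] [AddCommMonoid M'] [AddCommGroup G]
    {f : M → G} {f' : M' → G} {x h : M} {x' h' : M'}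
    (hff' : ∀ k : ℕ, f (x + k • h) = f' (x' + k • h')) (n : ℕ) :
    Δ_[h] ^[n] f x = Δ_[h'] ^[n] f' x' := by
  simp only [fwdDiff_iter_eq_sum_shift, hff']

lemma fwdDiff_iter_integral {M α G : Type*} [AddCommMonoid M] [MeasurableSpace α]
    [NormedAddCommGroup G] [NormedSpace ℝ G] {μ : Measure α} {f : M → α → G}
    (hf : ∀ x, Integrable (f x) μ) (h : M) (n : ℕ) :
    Δ_[h] ^[n] (fun x ↦ ∫ a, f x a ∂μ) = fun x ↦ ∫ a, Δ_[h] ^[n] (f · a) x ∂μ := by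
  induction n generalizing f with
  | zero => rfl
  | succ n ih =>
    have hstep : Δ_[h] (fun x ↦ ∫ a, f x a ∂μ) = fun x ↦ ∫ a, (f (x + h) a - f x a) ∂μ :=
      funext fun x ↦ (integral_sub (hf (x + h)) (hf x)).symm
    simp only [Function.iterate_succ_apply, hstep]
    exact ih fun x ↦ (hf (x + h)).sub (hf x)

lemma isBigO_fwdDiff_iter_zero {V F : Type*} [NormedAddCommGroup V] [NormedAddCommGroup F]
    {f : V → F} {j : ℕ} (hf : f =O[𝓝 0] fun v ↦ ‖v‖ ^ j) (n : ℕ) :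
    (fun u ↦ Δ_[u] ^[n] f 0) =O[𝓝 0] fun u ↦ ‖u‖ ^ j := by
  simp only [fwdDiff_iter_eq_sum_shift, zero_add]
  refine IsBigO.fun_sum fun k _ ↦ ?_
  have htendsto : Tendsto (fun u : V ↦ k • u) (𝓝 0) (𝓝 0) := by
    simpa using (continuous_nsmul (M := V) k).tendsto 0
  have hscale : (fun u : V ↦ ‖k • u‖ ^ j) =O[𝓝 0] fun u ↦ ‖u‖ ^ j :=
    (IsBigO.of_bound k (.of_forall fun u ↦ by simpa using norm_nsmul_le)).pow j
  have hcoeff (c : ℤ) : (fun u ↦ c • f (k • u)) =O[𝓝 0] fun u ↦ f (k • u) :=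
    .of_bound ‖c‖ (.of_forall fun u ↦ norm_zsmul_le c _)
  exact (hcoeff _).trans ((hf.comp_tendsto htendsto).trans hscale)

variable {𝕜 V F : Type*} [NontriviallyNormedField 𝕜] [NormedAddCommGroup V] [NormedSpace 𝕜 V]
  [NormedAddCommGroup F] [NormedSpace 𝕜 F]

lemma fwdDiff_iter_multilinear_diag_eq_zero {j n : ℕ} (hjn : j < n)
    (q : V [×j]→L[𝕜] F) (u : V) : Δ_[u] ^[n] (fun v ↦ q fun _ ↦ v) 0 = 0 := by
  have hdiag (k : ℕ) : q (fun _ ↦ 0 + k • u) = (0 + k • (1 : 𝕜)) ^ j • q fun _ ↦ u := by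
    simpa [Nat.cast_smul_eq_nsmul] using q.map_smul_univ (fun _ ↦ (k : 𝕜)) (fun _ ↦ u)
  have hpow := congrFun (fwdDiff_iter_pow_eq_zero_of_lt (R := 𝕜) hjn) 0
  rw [fwdDiff_iter_eq_sum_shift] at hpow
  simp only [fwdDiff_iter_eq_sum_shift, hdiag, ← smul_assoc, ← Finset.sum_smul, hpow,
    Pi.zero_apply, zero_smul]

lemma isBigO_fwdDiff_iter_of_analyticAt {f : V → F} {x : V} (hf : AnalyticAt 𝕜 f x) (n : ℕ) :
    (fun u ↦ Δ_[u] ^[n] f x) =O[𝓝 0] fun u ↦ ‖u‖ ^ n := by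
  obtain ⟨q, hq⟩ := hf
  have hremainder := isBigO_fwdDiff_iter_zero (hq.isBigO_sub_partialSum_pow n) n
  refine hremainder.congr_left fun u ↦ ?_
  have htaylor : Δ_[u] ^[n] (q.partialSum n) 0 = 0 := by
    have : q.partialSum n = ∑ j ∈ Finset.range n, fun v ↦ q j fun _ ↦ v := by
      ext v; simp [FormalMultilinearSeries.partialSum]
    rw [this, fwdDiff_iter_finsetSum, Finset.sum_apply]
    exact Finset.sum_eq_zero fun j hj ↦
      fwdDiff_iter_multilinear_diag_eq_zero (Finset.mem_range.1 hj) (q j) u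
  have hsplit : (fun y ↦ f (x + y)) = (fun y ↦ f (x + y) - q.partialSum n y) + q.partialSum n := by
    ext y; simp
  have hshift : Δ_[u] ^[n] f x = Δ_[u] ^[n] (fun y ↦ f (x + y)) 0 :=
    fwdDiff_iter_congr (fun k ↦ by simp) n
  rw [hshift, hsplit, fwdDiff_iter_add, Pi.add_apply, htaylor, add_zero]

lemma analyticAt_of_fwdDiff_iter_eq_zero {f : V → F} {x h : V} {n : ℕ}
    (hΔ : Δ_[h] ^[n] f = 0) (hf : ∀ k : ℕ, AnalyticAt 𝕜 f (x + (k + 1) • h)) :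
    AnalyticAt 𝕜 f x := by
  have hshift {g : V → F} {y : V} (hg : AnalyticAt 𝕜 g (y + h)) :
      AnalyticAt 𝕜 (fun v ↦ g (v + h)) y :=
    hg.comp_of_eq (f := fun v ↦ v + h) (analyticAt_id.fun_add analyticAt_const) rfl
  induction n generalizing f with
  | zero => exact (show f = 0 from hΔ) ▸ analyticAt_const
  | succ n ih =>
    have hdiff : AnalyticAt 𝕜 (Δ_[h] f) x :=
      ih hΔ fun k ↦ by
        refine (hshift ?_).fun_sub (hf k)
        rw [add_assoc, ← succ_nsmul]
        exact hf (k + 1)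
    have hnext : AnalyticAt 𝕜 (fun v ↦ f (v + h)) x := hshift (by simpa using hf 0)
    exact (hnext.fun_sub hdiff).congr (.of_forall fun v ↦ by simp [fwdDiff])

end ForwardDifference

section AbsRpow

lemma eq_zero_of_tendsto_rpow_nhdsGT_zero {q c : ℝ} (hc : c ≠ 0)
    (h : Tendsto (fun x : ℝ ↦ x ^ q) (𝓝[>] 0) (𝓝 c)) : q = 0 := by
  rcases lt_trichotomy q 0 with hq | hq | hq
  · exact absurd h (not_tendsto_nhds_of_tendsto_atTop (tendsto_rpow_neg_nhdsGT_zero hq) c)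
  · exact hq
  · have hzero : Tendsto (fun x : ℝ ↦ x ^ q) (𝓝[>] 0) (𝓝 0) := by
      simpa [Real.zero_rpow hq.ne'] using
        (Real.continuousAt_rpow_const 0 q (.inr hq.le)).tendsto.mono_left nhdsWithin_le_nhds
    exact absurd (tendsto_nhds_unique h hzero) hc

lemma exists_natCast_eq_of_analyticAt_abs_rpow {p : ℝ}
    (hp : AnalyticAt ℝ (fun x : ℝ ↦ |x| ^ p) 0) : ∃ n : ℕ, p = n := by
  have hne : ¬ ∀ᶠ x : ℝ in 𝓝 0, |x| ^ p = 0 := fun hzero ↦ by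
    obtain ⟨x, hx, hx0 : 0 < x⟩ :=
      ((hzero.filter_mono nhdsWithin_le_nhds).and (self_mem_nhdsWithin (s := Set.Ioi 0))).exists
    exact (Real.rpow_pos_of_pos (abs_pos.2 hx0.ne') p).ne' hx
  obtain ⟨n, g, hg, hg0, hfactor⟩ := hp.exists_eventuallyEq_pow_smul_nonzero_iff.2 hne
  have hquot : ∀ᶠ x : ℝ in 𝓝[>] 0, g x = x ^ (p - n) := by
    filter_upwards [hfactor.filter_mono nhdsWithin_le_nhds, self_mem_nhdsWithin]
      with x hx (hx0 : 0 < x)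
    rw [abs_of_pos hx0, sub_zero, smul_eq_mul] at hx
    rw [Real.rpow_sub hx0, Real.rpow_natCast, hx, mul_div_cancel_left₀ _ (pow_pos hx0 n).ne']
  have hlim : Tendsto g (𝓝[>] 0) (𝓝 (g 0)) := hg.continuousAt.mono_left nhdsWithin_le_nhds
  exact ⟨n, sub_eq_zero.1 (eq_zero_of_tendsto_rpow_nhdsGT_zero hg0 (hlim.congr' hquot))⟩

lemma exists_eq_two_mul_of_analyticAt_abs_rpow {p : ℝ}
    (hp : AnalyticAt ℝ (fun x : ℝ ↦ |x| ^ p) 0) : ∃ k : ℕ, p = 2 * k := by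
  obtain ⟨n, rfl⟩ := exists_natCast_eq_of_analyticAt_abs_rpow hp
  simp only [Real.rpow_natCast] at hp
  have hright : ∀ᶠ x : ℝ in 𝓝[>] 0, |x| ^ n = x ^ n := by
    filter_upwards [self_mem_nhdsWithin] with x (hx : 0 < x)
    rw [abs_of_pos hx]
  have heq : ∀ᶠ x : ℝ in 𝓝 0, |x| ^ n = x ^ n :=
    (hp.frequently_eq_iff_eventually_eq (analyticAt_id.fun_pow n)).1
      (hright.frequently.filter_mono (nhdsGT_le_nhdsNE 0))
  obtain ⟨x, hx, hx0 : x < 0⟩ :=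
    ((heq.filter_mono nhdsWithin_le_nhds).and (self_mem_nhdsWithin (s := Set.Iio 0))).exists
  have heven : Even n := by
    by_contra hodd
    have := (Nat.not_even_iff_odd.1 hodd).pow_neg hx0
    linarith [pow_nonneg (abs_nonneg x) n]
  obtain ⟨k, rfl⟩ := heven.two_dvd
  exact ⟨k, by push_cast; rfl⟩

end AbsRpow

section DiffKernel

variable {E : Type*} [NormedAddCommGroup E]

/-- The `m`-th forward difference with step `h` of the kernel `v ↦ ‖v‖ ^ p`. For large `m` it is
integrable, unlike `‖v‖ ^ p` itself. It is complex-valued so that it has a Fourier transform. -/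
noncomputable def diffKernel (p : ℝ) (m : ℕ) (h : E) : E → ℂ :=
  Δ_[h] ^[m] fun v ↦ ((‖v‖ ^ p : ℝ) : ℂ)

lemma continuous_diffKernel {p : ℝ} (hp : 0 ≤ p) (m : ℕ) (h : E) :
    Continuous (diffKernel p m h) := by
  have hsum := funext (fwdDiff_iter_eq_sum_shift h (fun v ↦ ((‖v‖ ^ p : ℝ) : ℂ)) m)
  rw [diffKernel, hsum]
  have : Continuous fun v : E ↦ ‖v‖ ^ p := continuous_norm.rpow_const fun _ ↦ .inr hp
  fun_prop

lemma integral_diffKernel_sub [MeasurableSpace E] {p : ℝ} {μ : Measure E}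
    (hμ : ∀ w, Integrable (fun z ↦ ‖w - z‖ ^ p) μ) (m : ℕ) (h w : E) :
    ∫ z, diffKernel p m h (w - z) ∂μ = Δ_[h] ^[m] (fun w ↦ ∫ z, ((‖w - z‖ ^ p : ℝ) : ℂ) ∂μ) w := by
  rw [fwdDiff_iter_integral fun w ↦ (hμ w).ofReal]
  congr with z
  exact fwdDiff_iter_congr (fun k ↦ by rw [add_sub_right_comm]) m

lemma diffKernel_comp_of_norm_eq {E' : Type*} [NormedAddCommGroup E'] {p c : ℝ} (hc : 0 ≤ c)
    {L : E →+ E'} (hL : ∀ v, ‖L v‖ = c * ‖v‖) (m : ℕ) (h v : E) :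
    diffKernel p m (L h) (L v) = (c ^ p : ℝ) * diffKernel p m h v := by
  rw [← smul_eq_mul, diffKernel, diffKernel, ← Pi.smul_apply, ← fwdDiff_iter_const_smul]
  refine fwdDiff_iter_congr (fun k ↦ ?_) m
  rw [← map_nsmul, ← map_add, hL, Real.mul_rpow hc (norm_nonneg _), Complex.ofReal_mul,
    Pi.smul_apply, smul_eq_mul]

lemma diffKernel_ne_zero [NormedSpace ℝ E] {p : ℝ} (hp_even : ∀ k : ℕ, p ≠ 2 * k) (m : ℕ)
    {h : E} (hh : h ≠ 0) : diffKernel p m h ≠ 0 := by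
  intro hzero
  have hline : diffKernel p m (1 : ℝ) = 0 := by
    ext x
    have hx := diffKernel_comp_of_norm_eq (p := p) (norm_nonneg h)
      (L := (LinearMap.toSpanSingleton ℝ E h).toAddMonoidHom)
      (fun v ↦ by simp [norm_smul, mul_comm]) m 1 x
    simpa [hzero, (Real.rpow_pos_of_pos (norm_pos_iff.2 hh) p).ne'] using hx
  have hanalytic : AnalyticAt ℝ (fun x : ℝ ↦ ((‖x‖ ^ p : ℝ) : ℂ)) 0 := by
    refine analyticAt_of_fwdDiff_iter_eq_zero hline fun k ↦ ?_
    have hk : (0 : ℝ) + (k + 1) • 1 ≠ 0 := by simpa using k.cast_add_one_ne_zero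
    have hsmooth : ContDiffAt ℝ ⊤ (fun x : ℝ ↦ ‖x‖ ^ p) (0 + (k + 1) • 1) :=
      (contDiffAt_norm ℝ hk).rpow_const_of_ne (norm_ne_zero_iff.2 hk)
    exact (Complex.ofRealCLM.analyticAt _).comp hsmooth.analyticAt
  have hre : AnalyticAt ℝ (fun x : ℝ ↦ |x| ^ p) 0 := by
    simpa [Function.comp_def] using (Complex.reCLM.analyticAt _).comp hanalytic
  obtain ⟨k, hk⟩ := exists_eq_two_mul_of_analyticAt_abs_rpow hre
  exact hp_even k hk

variable [InnerProductSpace ℝ E]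

lemma norm_add_nsmul_rpow {v : E} (hv : v ≠ 0) (h : E) (k : ℕ) (p : ℝ) :
    ‖v + k • h‖ ^ p = ‖v‖ ^ p *
      (1 + 2 * (k * (inner ℝ v h / ‖v‖ ^ 2)) + (k * (‖h‖ / ‖v‖)) ^ 2) ^ (p / 2) := by
  have hsq : ‖v + k • h‖ ^ 2 =
      ‖v‖ ^ 2 * (1 + 2 * (k * (inner ℝ v h / ‖v‖ ^ 2)) + (k * (‖h‖ / ‖v‖)) ^ 2) := by
    have : ‖v‖ ≠ 0 := norm_ne_zero_iff.2 hv
    rw [norm_add_sq_real, ← Nat.cast_smul_eq_nsmul ℝ, inner_smul_right, norm_smul,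
      Real.norm_natCast]
    field_simp
  have hbase : 0 ≤ 1 + 2 * (k * (inner ℝ v h / ‖v‖ ^ 2)) + (k * (‖h‖ / ‖v‖)) ^ 2 :=
    nonneg_of_mul_nonneg_right (hsq ▸ sq_nonneg _) (pow_pos (norm_pos_iff.2 hv) 2)
  have hrpow (x : E) : ‖x‖ ^ p = (‖x‖ ^ 2) ^ (p / 2) := by
    rw [← Real.rpow_natCast_mul (norm_nonneg x), Nat.cast_ofNat, mul_div_cancel₀ p two_ne_zero]
  rw [hrpow (v + k • h), hsq, Real.mul_rpow (sq_nonneg _) hbase, ← hrpow]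

lemma isBigO_diffKernel_cobounded (p : ℝ) (m : ℕ) (h : E) :
    diffKernel p m h =O[Bornology.cobounded E] fun v ↦ ‖v‖ ^ (p - m) := by
  -- `‖v + k • h‖ ^ p = ‖v‖ ^ p * G (k • y v)` with `y v → 0`, so the `m`-th difference at `v` is
  -- `‖v‖ ^ p` times that of the analytic function `G` at `0` with small step `y v`.
  let G : ℝ × ℝ → ℂ := fun y ↦ (((1 + 2 * y.1 + y.2 ^ 2) ^ (p / 2) : ℝ) : ℂ)
  let y : E → ℝ × ℝ := fun v ↦ (inner ℝ v h / ‖v‖ ^ 2, ‖h‖ / ‖v‖)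
  have hG : AnalyticAt ℝ G 0 := by
    have hrpow : ContDiffAt ℝ ⊤ (fun y : ℝ × ℝ ↦ (1 + 2 * y.1 + y.2 ^ 2) ^ (p / 2)) 0 :=
      ContDiffAt.rpow_const_of_ne (by fun_prop) (by simp)
    exact (Complex.ofRealCLM.analyticAt _).comp hrpow.analyticAt
  have hne : ∀ᶠ v : E in Bornology.cobounded E, 0 < ‖v‖ :=
    tendsto_norm_cobounded_atTop.eventually_gt_atTop 0
  have hy_norm : y =O[Bornology.cobounded E] fun v ↦ ‖v‖⁻¹ := by
    refine IsBigO.of_bound ‖h‖ (hne.mono fun v hv ↦ ?_)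
    rw [norm_inv, norm_norm, ← div_eq_mul_inv, Prod.norm_def, max_le_iff]
    refine ⟨?_, by simp [y]⟩
    rw [norm_div, norm_pow, norm_norm, div_le_div_iff₀ (pow_pos hv 2) hv]
    calc ‖inner ℝ v h‖ * ‖v‖ ≤ ‖v‖ * ‖h‖ * ‖v‖ := by gcongr; exact norm_inner_le_norm v h
      _ = ‖h‖ * ‖v‖ ^ 2 := by ring
  have hy_tendsto : Tendsto y (Bornology.cobounded E) (𝓝 0) :=
    hy_norm.trans_tendsto tendsto_norm_cobounded_atTop.inv_tendsto_atTop
  have hfactor : ∀ᶠ v in Bornology.cobounded E,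
      ((‖v‖ ^ p : ℝ) : ℂ) * Δ_[y v] ^[m] G 0 = diffKernel p m h v := by
    filter_upwards [hne] with v hv
    rw [diffKernel, ← smul_eq_mul, ← Pi.smul_apply, ← fwdDiff_iter_const_smul]
    refine fwdDiff_iter_congr (fun k ↦ ?_) m
    rw [norm_add_nsmul_rpow (norm_pos_iff.1 hv)]
    simp [G, y]
  have hbound : (fun v ↦ ((‖v‖ ^ p : ℝ) : ℂ) * Δ_[y v] ^[m] G 0)
      =O[Bornology.cobounded E] fun v ↦ ‖v‖ ^ p * ‖v‖⁻¹ ^ m :=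
    (Complex.isBigO_ofReal_left.2 (isBigO_refl _ _)).mul <|
      ((isBigO_fwdDiff_iter_of_analyticAt hG m).comp_tendsto hy_tendsto).trans
        (hy_norm.norm_left.pow m)
  refine hbound.congr' hfactor (hne.mono fun v hv ↦ ?_)
  simp only [Real.rpow_sub hv, Real.rpow_natCast, inv_pow, div_eq_mul_inv]

lemma integrable_diffKernel [FiniteDimensional ℝ E] [MeasurableSpace E] [BorelSpace E]
    {p : ℝ} (hp : 0 ≤ p) {m : ℕ} (hm : p + Module.finrank ℝ E < m) (h : E) :
    Integrable (diffKernel p m h) := by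
  have hnorm : (fun v : E ↦ ‖v‖) ~[Bornology.cobounded E] fun v ↦ 1 + ‖v‖ := by
    have hone : (fun _ : E ↦ (1 : ℝ)) =o[Bornology.cobounded E] fun v ↦ ‖v‖ :=
      isLittleO_const_left.2
        (.inr (by simpa [Function.comp_def] using tendsto_norm_cobounded_atTop (E := E)))
    simpa only [add_comm] using! (IsEquivalent.refl.add_isLittleO hone).symm
  have hdecay : diffKernel p m h =O[cocompact E] fun v ↦ (1 + ‖v‖) ^ (-(m - p)) := by
    rw [← Metric.cobounded_eq_cocompact, neg_sub]
    exact (isBigO_diffKernel_cobounded p m h).trans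
      (hnorm.rpow fun v ↦ by positivity).isBigO
  refine (continuous_diffKernel hp m h).locallyIntegrable.integrable_of_isBigO_cocompact hdecay ?_
  exact (integrable_one_add_norm (by linarith)).integrableAtFilter _

end DiffKernel

section Fourier

variable {E : Type*} [NormedAddCommGroup E] [InnerProductSpace ℝ E] [FiniteDimensional ℝ E]
  [MeasurableSpace E] [BorelSpace E]

lemma fourier_comp_smul {F : Type*} [NormedAddCommGroup F] [NormedSpace ℂ F] (f : E → F) {c : ℝ}
    (hc : c ≠ 0) (w : E) :
    𝓕 (fun v ↦ f (c • v)) w = |(c ^ Module.finrank ℝ E)⁻¹| • 𝓕 f (c⁻¹ • w) := by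
  rw [Real.fourier_eq, Real.fourier_eq, ← Measure.integral_comp_smul]
  congr with v
  rw [real_inner_smul_left, real_inner_smul_right, mul_inv_cancel_left₀ hc]

lemma fourier_diffKernel_smul {p c : ℝ} (hc : 0 < c) (m : ℕ) (h w : E) :
    𝓕 (diffKernel p m (c • h)) w =
      (c ^ p * c ^ Module.finrank ℝ E : ℝ) * 𝓕 (diffKernel p m h) (c • w) := by
  have hscale : diffKernel p m (c • h) =
      ((c ^ p : ℝ) : ℂ) • fun v ↦ diffKernel p m h (c⁻¹ • v) := by
    ext v
    have : diffKernel p m (LinearMap.lsmul ℝ E c h) (LinearMap.lsmul ℝ E c (c⁻¹ • v)) =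
        (c ^ p : ℝ) * diffKernel p m h (c⁻¹ • v) := diffKernel_comp_of_norm_eq hc.le
      (L := (LinearMap.lsmul ℝ E c).toAddMonoidHom)
      (fun v ↦ by simp [norm_smul, abs_of_pos hc]) m h (c⁻¹ • v)
    rwa [LinearMap.lsmul_apply, LinearMap.lsmul_apply, smul_inv_smul₀ hc.ne'] at this
  rw [hscale, Real.fourier_eq]
  simp only [Pi.smul_apply, smul_comm (_ : Circle) (_ : ℂ), integral_smul]
  rw [← Real.fourier_eq, fourier_comp_smul _ (inv_ne_zero hc.ne'), inv_pow, inv_inv, inv_inv,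
    abs_of_pos (pow_pos hc _), Complex.real_smul, smul_eq_mul, Complex.ofReal_mul, mul_assoc]

lemma fourier_diffKernel_isometry (A : E ≃ₗᵢ[ℝ] E) (p : ℝ) (m : ℕ) (h w : E) :
    𝓕 (diffKernel p m (A h)) (A w) = 𝓕 (diffKernel p m h) w := by
  have hinvariant : diffKernel p m (A h) ∘ A = diffKernel p m h := by
    ext v
    simpa using! diffKernel_comp_of_norm_eq (p := p) zero_le_one
      (L := A.toLinearEquiv.toLinearMap.toAddMonoidHom) (fun v ↦ by simp) m h v
  rw [← Real.fourier_comp_linearIsometry, hinvariant]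

lemma exists_fourier_diffKernel_ne_zero {p : ℝ} (hp : 0 ≤ p) (hp_even : ∀ k : ℕ, p ≠ 2 * k)
    {m : ℕ} (hm : p + Module.finrank ℝ E < m) {t : E} (ht : t ≠ 0) :
    ∃ h : E, 𝓕 (diffKernel p m h) t ≠ 0 := by
  by_contra! hvanish
  have hzero (h s : E) (hs : s ≠ 0) : 𝓕 (diffKernel p m h) s = 0 := by
    set c := ‖s‖ / ‖t‖
    have hc : 0 < c := div_pos (norm_pos_iff.2 hs) (norm_pos_iff.2 ht)
    let A := (ℝ ∙ (c • t - s))ᗮ.reflection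
    have hA : A (c • t) = s := Submodule.reflection_sub <| by
      rw [norm_smul, Real.norm_of_nonneg hc.le, div_mul_cancel₀ _ (norm_ne_zero_iff.2 ht)]
    have hscaled := fourier_diffKernel_smul (p := p) hc m (A.symm h) t
    rw [hvanish, ← fourier_diffKernel_isometry A, hA, A.apply_symm_apply] at hscaled
    refine (mul_eq_zero.1 hscaled.symm).resolve_left ?_
    exact_mod_cast (mul_pos (Real.rpow_pos_of_pos hc p) (pow_pos hc _)).ne'
  have : Nontrivial E := ⟨t, 0, ht⟩
  have hae : 𝓕 (diffKernel p m t) =ᵐ[volume] 0 :=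
    (Measure.ae_ne volume 0).mono (hzero t)
  have hinversion := (continuous_diffKernel hp m t).fourierInv_fourier_eq
    (integrable_diffKernel hp hm t) ((integrable_zero E ℂ volume).congr hae.symm)
  refine diffKernel_ne_zero hp_even m ht (hinversion.symm.trans (funext fun v ↦ ?_))
  rw [Real.fourierInv_congr_ae hae]
  simp [Real.fourierInv_eq]

lemma fourier_integral_sub (μ : Measure E) [IsFiniteMeasure μ] {f : E → ℂ} (hf : Integrable f)
    (t : E) :
    𝓕 (fun w ↦ ∫ z, f (w - z) ∂μ) t = charFun μ (-(2 * Real.pi) • t) * 𝓕 f t := by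
  let χ (v : E) : ℂ := Real.fourierChar (-inner ℝ v t)
  have hχ_norm (v : E) : ‖χ v‖ ≤ 1 := (Circle.norm_coe _).le
  have hχ_mul (w z : E) : χ z * χ (w - z) = χ w := by
    rw [← Circle.coe_mul, ← AddChar.map_add_eq_mul, ← neg_add, ← inner_add_left, add_sub_cancel]
  have hχ_continuous : Continuous χ := by fun_prop
  have hχ_integrable : Integrable χ μ :=
    .of_bound hχ_continuous.aestronglyMeasurable 1 (.of_forall hχ_norm)
  have hcharFun : charFun μ (-(2 * Real.pi) • t) = ∫ z, χ z ∂μ := by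
    rw [charFun_apply]
    congr with z
    simp [χ, Real.fourierChar_apply, inner_smul_right]
  have hχf : Integrable fun v ↦ χ v * f v :=
    hf.bdd_mul hχ_continuous.aestronglyMeasurable (.of_forall hχ_norm)
  calc 𝓕 (fun w ↦ ∫ z, f (w - z) ∂μ) t
      = ∫ w, ∫ z, χ z * (χ (w - z) * f (w - z)) ∂μ := by
        simp only [← mul_assoc, hχ_mul, integral_const_mul]
        rfl
    _ = (∫ z, χ z ∂μ) * ∫ v, χ v * f v :=
        integral_convolution (ContinuousLinearMap.mul ℝ ℂ) hχ_integrable hχf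
    _ = charFun μ (-(2 * Real.pi) • t) * 𝓕 f t := by rw [hcharFun]; rfl

end Fourier

section Potential

lemma integrable_norm_sub_rpow {α F : Type*} [MeasurableSpace α] [NormedAddCommGroup F]
    {μ : Measure α} [IsFiniteMeasure μ] {p : ℝ} (hp : 0 < p) {f : α → F}
    (hf : AEStronglyMeasurable f μ) (hfp : Integrable (fun x ↦ ‖f x‖ ^ p) μ) (w : F) :
    Integrable (fun x ↦ ‖w - f x‖ ^ p) μ := by
  lift p to NNReal using hp.le
  have hp0 : (p : ENNReal) ≠ 0 := by simpa [pos_iff_ne_zero] using hp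
  have hLp : MemLp f p μ := (integrable_norm_rpow_iff hf hp0 ENNReal.coe_ne_top).1 hfp
  exact ((memLp_const w).sub hLp).integrable_norm_rpow hp0 ENNReal.coe_ne_top

variable {E : Type*} [NormedAddCommGroup E] [InnerProductSpace ℝ E] [FiniteDimensional ℝ E]
  [MeasurableSpace E] [BorelSpace E]

lemma integral_diffKernel_sub_ae_eq {μ ν : Measure E} {p : ℝ}
    (hμ : ∀ w, Integrable (fun z ↦ ‖w - z‖ ^ p) μ) (hν : ∀ w, Integrable (fun z ↦ ‖w - z‖ ^ p) ν)
    (hμν : ∀ᵐ w, ∫ z, ‖w - z‖ ^ p ∂μ = ∫ z, ‖w - z‖ ^ p ∂ν) (m : ℕ) (h : E) :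
    (fun w ↦ ∫ z, diffKernel p m h (w - z) ∂μ) =ᵐ[volume]
      fun w ↦ ∫ z, diffKernel p m h (w - z) ∂ν := by
  have hshifts : ∀ᵐ w : E, ∀ k : ℕ,
      ∫ z, ‖w + k • h - z‖ ^ p ∂μ = ∫ z, ‖w + k • h - z‖ ^ p ∂ν :=
    ae_all_iff.2 fun k ↦
      (measurePreserving_add_right volume (k • h)).quasiMeasurePreserving.ae hμν
  filter_upwards [hshifts] with w hw
  rw [integral_diffKernel_sub hμ, integral_diffKernel_sub hν]
  refine fwdDiff_iter_congr (fun k ↦ ?_) m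
  rw [integral_complex_ofReal, integral_complex_ofReal, hw k]

theorem measure_ext_of_integral_norm_sub_rpow [Nontrivial E] {μ ν : Measure E} [IsFiniteMeasure μ]
    [IsFiniteMeasure ν] {p : ℝ} (hp : 0 < p) (hp_even : ∀ k : ℕ, p ≠ 2 * k)
    (hμ : Integrable (fun z ↦ ‖z‖ ^ p) μ) (hν : Integrable (fun z ↦ ‖z‖ ^ p) ν)
    (hμν : ∀ᵐ w, ∫ z, ‖w - z‖ ^ p ∂μ = ∫ z, ‖w - z‖ ^ p ∂ν) : μ = ν := by
  obtain ⟨m, hm⟩ := exists_nat_gt (p + Module.finrank ℝ E)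
  have hμ_sub := integrable_norm_sub_rpow hp aestronglyMeasurable_id hμ
  have hν_sub := integrable_norm_sub_rpow hp aestronglyMeasurable_id hν
  have hcharFun {t : E} (ht : t ≠ 0) : charFun μ t = charFun ν t := by
    have hπ : -(2 * Real.pi) ≠ 0 := by simp [Real.pi_ne_zero]
    obtain ⟨h, hh⟩ :=
      exists_fourier_diffKernel_ne_zero hp.le hp_even hm (smul_ne_zero (inv_ne_zero hπ) ht)
    have hint := integrable_diffKernel hp.le hm h
    have hfourier := fourier_integral_sub μ hint ((-(2 * Real.pi))⁻¹ • t)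
    have hpotential := integral_diffKernel_sub_ae_eq hμ_sub hν_sub hμν m h
    rw [Real.fourier_congr_ae hpotential, fourier_integral_sub ν hint, smul_inv_smul₀ hπ]
      at hfourier
    exact (mul_right_cancel₀ hh hfourier).symm
  refine Measure.ext_of_charFun ?_
  exact continuous_charFun.ext_on (dense_compl_singleton 0) continuous_charFun
    fun t ht ↦ hcharFun ht

end Potential

end

theorem rudin_equimeasurability_general {𝕜 M N : Type*} [RCLike 𝕜] [MeasurableSpace 𝕜]
    [BorelSpace 𝕜] [MeasurableSpace M] [MeasurableSpace N] {μ : Measure M} {ν : Measure N}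
    [IsFiniteMeasure μ] [IsFiniteMeasure ν] {p : ℝ} (hp : 0 < p) (hp_even : ∀ k : ℕ, p ≠ 2 * k)
    {f : M → 𝕜} {g : N → 𝕜} (hf : AEMeasurable f μ) (hg : AEMeasurable g ν)
    (hfi : Integrable (fun x ↦ ‖f x‖ ^ p) μ) (hgi : Integrable (fun y ↦ ‖g y‖ ^ p) ν)
    (heq : ∀ α : 𝕜, ∫ x, ‖1 + α * f x‖ ^ p ∂μ = ∫ y, ‖1 + α * g y‖ ^ p ∂ν) :
    ProbabilityTheory.IdentDistrib f g μ ν := by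
  have hmeas (w : 𝕜) : Measurable fun z : 𝕜 ↦ ‖w - z‖ ^ p := by fun_prop
  have hmoment : Measurable fun z : 𝕜 ↦ ‖z‖ ^ p := by fun_prop
  have hnorm {w : 𝕜} (hw : w ≠ 0) (z : 𝕜) : ‖w - z‖ ^ p = ‖w‖ ^ p * ‖1 + -w⁻¹ * z‖ ^ p := by
    rw [← Real.mul_rpow (norm_nonneg _) (norm_nonneg _), ← norm_mul, mul_add, mul_one, neg_mul,
      mul_neg, mul_inv_cancel_left₀ hw, sub_eq_add_neg]
  refine ⟨hf, hg, measure_ext_of_integral_norm_sub_rpow hp hp_even ?_ ?_ ?_⟩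
  · exact (integrable_map_measure hmoment.aestronglyMeasurable hf).2 hfi
  · exact (integrable_map_measure hmoment.aestronglyMeasurable hg).2 hgi
  · filter_upwards [Measure.ae_ne volume (0 : 𝕜)] with w hw
    rw [integral_map hf (hmeas w).aestronglyMeasurable,
      integral_map hg (hmeas w).aestronglyMeasurable]
    simp only [hnorm hw, integral_const_mul, heq]

/-- Rudin's equimeasurability theorem (one-function case). -/
theorem rudin_equimeasurability {M N : Type*} [MeasurableSpace M] [MeasurableSpace N]
    (μ : Measure M) (ν : Measure N) [IsFiniteMeasure μ] [IsFiniteMeasure ν]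
    (p : ℝ) (hp : 0 < p) (hpe : ∀ k : ℕ, p ≠ 2 * k)
    (f : M → ℂ) (g : N → ℂ) (hf : Measurable f) (hg : Measurable g)
    (hfi : Integrable (fun x => ‖f x‖ ^ p) μ)
    (hgi : Integrable (fun y => ‖g y‖ ^ p) ν)
    (heq : ∀ α : ℂ, ∫ x, ‖1 + α * f x‖ ^ p ∂μ = ∫ y, ‖1 + α * g y‖ ^ p ∂ν) :
    ∀ u : ℂ → ENNReal, Measurable u →
      ∫⁻ x, u (f x) ∂μ = ∫⁻ y, u (g y) ∂ν := by
  intro u hu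
  exact ((rudin_equimeasurability_general hp hpe hf.aemeasurable hg.aemeasurable hfi hgi heq).comp
    hu).lintegral_eq
end

section
/- Let D₁ ⊂ ℂⁿ and D₂ ⊂ ℂᵐ be bounded domains, p > 0 not an even integer, and let φ₀,…,φ_N ∈ A^p(D₁), ψ₀,…,ψ_N ∈ A^p(D₂) with φ₀ ≢ 0 and ψ₀ ≢ 0. Suppose ‖φ₀ + Σₖ αₖφₖ‖_p = ‖ψ₀ + Σₖ αₖψₖ‖_p for all (α₁,…,α_N) ∈ ℂᴺ. Then for every nonnegative Borel function u : ℂᴺ → ℝ, ∫_{D₁} u(φ₁/φ₀,…,φ_N/φ₀)|φ₀|^p dλ_n = ∫_{D₂} u(ψ₁/ψ₀,…,ψ_N/ψ₀)|ψ₀|^p dλ_m. -/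
open MeasureTheory

/-!
Let `2M < p < 2M + 2`; such an `M` exists exactly because `p` is not an even integer. Write `R` for
`(-1)^(M+1)` times the remainder in the Taylor expansion of the cosine of degree `2M`. The integral
of `R ⟪x, z⟫ ‖z‖^(-p-d)` over `z` in a `d`-dimensional Euclidean space converges and, by rotation
invariance and homogeneity, is a multiple of `‖x‖^p`. A difference of order `2M + 2` in `x` kills
the polynomial part of `R` and leaves `cos ⟪x, z⟫` times a multiplier. So the differences of
`y ↦ ∫ ‖y + w‖^p dμ(w)` are Fourier transforms of that multiplier times the characteristic function
of `μ`, and Fourier inversion recovers `μ`. Moments known up to an additive constant are enough,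
since differences kill constants too.

For one quotient `f / f₀` the moments are those of the measure `|f₀|^p dμ`: up to a constant coming
from `{f₀ = 0}`, the integral of `|y + f / f₀|^p |f₀|^p` is that of `|y f₀ + f|^p`, which the
hypothesis controls for `y ≠ 0` by homogeneity. A tuple of quotients reduces to a single one by the
Cramér–Wold device.
-/

section CosineRemainder

/-- `(-1) ^ M` times the remainder of the Taylor polynomial of `cos` at `0` of degree `2 * M - 2`;
with this sign it is nonnegative for `0 < M`. For `M = 0` it is `cos` itself. -/
noncomputable def cosRemainder : ℕ → ℝ → ℝ
  | 0 => Real.cos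
  | M + 1 => fun t => t ^ (2 * M) / (2 * M).factorial - cosRemainder M t

/-- The analogue of `cosRemainder` for `sin`: `(-1) ^ M` times the remainder of its Taylor
polynomial at `0` of degree `2 * M - 1`, which for `M = 0` is taken to be `0`. It is the derivative
of `cosRemainder (M + 1)` and an antiderivative of `cosRemainder M`. -/
noncomputable def sinRemainder : ℕ → ℝ → ℝ
  | 0 => Real.sin
  | M + 1 => fun t => t ^ (2 * M + 1) / (2 * M + 1).factorial - sinRemainder M t

lemma hasDerivAt_pow_succ_div_factorial (n : ℕ) (t : ℝ) :
    HasDerivAt (fun t : ℝ => t ^ (n + 1) / (n + 1).factorial) (t ^ n / n.factorial) t := by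
  refine ((hasDerivAt_pow (n + 1) t).div_const _).congr_deriv ?_
  rw [Nat.factorial_succ]
  push_cast
  field_simp

lemma hasDerivAt_sinRemainder (M : ℕ) (t : ℝ) :
    HasDerivAt (sinRemainder M) (cosRemainder M t) t := by
  induction M with
  | zero => exact Real.hasDerivAt_sin t
  | succ M ih => exact (hasDerivAt_pow_succ_div_factorial (2 * M) t).sub ih

lemma hasDerivAt_cosRemainder_succ (M : ℕ) (t : ℝ) :
    HasDerivAt (cosRemainder (M + 1)) (sinRemainder M t) t := by
  induction M with
  | zero => simpa [cosRemainder, sinRemainder] using (Real.hasDerivAt_cos t).const_sub 1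
  | succ M ih => exact (hasDerivAt_pow_succ_div_factorial (2 * M + 1) t).sub ih

lemma sinRemainder_zero (M : ℕ) : sinRemainder M 0 = 0 := by
  induction M with
  | zero => exact Real.sin_zero
  | succ M ih => simp [sinRemainder, ih]

lemma cosRemainder_succ_zero (M : ℕ) : cosRemainder (M + 1) 0 = 0 := by
  induction M with
  | zero => simp [cosRemainder]
  | succ M ih =>
    change 0 ^ (2 * (M + 1)) / _ - cosRemainder (M + 1) 0 = 0
    simp [ih]

lemma cosRemainder_neg (M : ℕ) (t : ℝ) : cosRemainder M (-t) = cosRemainder M t := by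
  induction M with
  | zero => exact Real.cos_neg t
  | succ M ih => simp [cosRemainder, ih]

lemma continuous_cosRemainder (M : ℕ) : Continuous (cosRemainder M) := by
  induction M with
  | zero => exact Real.continuous_cos
  | succ M ih => simp only [cosRemainder]; fun_prop

lemma nonneg_of_hasDerivAt_nonneg {f f' : ℝ → ℝ} (hf : ∀ t, HasDerivAt f (f' t) t) (hf0 : f 0 = 0)
    (hf' : ∀ t, 0 < t → 0 ≤ f' t) {t : ℝ} (ht : 0 ≤ t) : 0 ≤ f t := by
  have hmono : MonotoneOn f (Set.Ici 0) :=
    monotoneOn_of_hasDerivWithinAt_nonneg (convex_Ici 0)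
      (fun s _ => (hf s).continuousAt.continuousWithinAt) (fun s _ => (hf s).hasDerivWithinAt)
      fun s hs => hf' s (by rwa [interior_Ici] at hs)
  exact hf0 ▸ hmono Set.self_mem_Ici ht ht

lemma cosRemainder_succ_nonneg (M : ℕ) (t : ℝ) : 0 ≤ cosRemainder (M + 1) t := by
  induction M generalizing t with
  | zero => simpa [cosRemainder] using Real.cos_le_one t
  | succ M ih =>
    have hsin (s : ℝ) (hs : 0 < s) : 0 ≤ sinRemainder (M + 1) s :=
      nonneg_of_hasDerivAt_nonneg (hasDerivAt_sinRemainder _) (sinRemainder_zero _)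
        (fun r _ => ih r) hs.le
    have hcos (s : ℝ) (hs : 0 ≤ s) : 0 ≤ cosRemainder (M + 2) s :=
      nonneg_of_hasDerivAt_nonneg (hasDerivAt_cosRemainder_succ _) (cosRemainder_succ_zero _) hsin
        hs
    rcases le_total 0 t with ht | ht
    · exact hcos t ht
    · exact cosRemainder_neg (M + 2) t ▸ hcos (-t) (neg_nonneg.2 ht)

lemma pow_two_mul_div_factorial_le (M : ℕ) (t : ℝ) :
    t ^ (2 * M) / (2 * M).factorial ≤ |t| ^ (2 * M) := by
  rw [(even_two_mul M).pow_abs]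
  exact div_le_self ((even_two_mul M).pow_nonneg t) (mod_cast Nat.factorial_pos _)

lemma abs_cosRemainder_le (M : ℕ) (t : ℝ) : |cosRemainder M t| ≤ |t| ^ (2 * M) := by
  have hupper : cosRemainder M t ≤ t ^ (2 * M) / (2 * M).factorial :=
    sub_nonneg.1 (cosRemainder_succ_nonneg M t)
  cases M with
  | zero => simpa [cosRemainder] using Real.abs_cos_le_one t
  | succ M =>
    exact (abs_of_nonneg (cosRemainder_succ_nonneg M t)).trans_le
      (hupper.trans (pow_two_mul_div_factorial_le _ t))

lemma cosRemainder_succ_le_min (M : ℕ) (t : ℝ) :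
    cosRemainder (M + 1) t ≤ 2 * min (|t| ^ (2 * M)) (|t| ^ (2 * (M + 1))) := by
  have hlow : cosRemainder (M + 1) t ≤ 2 * |t| ^ (2 * M) := by
    rw [cosRemainder, two_mul (|t| ^ _)]
    exact (sub_eq_add_neg _ _).trans_le (add_le_add (pow_two_mul_div_factorial_le M t)
      (neg_le.1 (neg_le_of_abs_le (abs_cosRemainder_le M t))))
  have hhigh : cosRemainder (M + 1) t ≤ 2 * |t| ^ (2 * (M + 1)) :=
    ((le_abs_self _).trans (abs_cosRemainder_le (M + 1) t)).trans
      (le_mul_of_one_le_left (by positivity) one_le_two)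
  rw [mul_min_of_nonneg _ _ zero_le_two]
  exact le_min hlow hhigh

end CosineRemainder

section ForwardDifference

lemma fwdDiff_iter_comp_affine {M N G : Type*} [AddCommMonoid M] [AddCommMonoid N] [AddCommGroup G]
    (L : M →+ N) (a : N) (f : N → G) (h : M) (n : ℕ) (x : M) :
    (fwdDiff h)^[n] (fun y => f (a + L y)) x = (fwdDiff (L h))^[n] f (a + L x) := by
  simp only [fwdDiff_iter_eq_sum_shift, map_add, map_nsmul, add_assoc]

lemma fwdDiff_iter_pow_eq_zero {R : Type*} [CommRing R] {j n : ℕ} (hj : j < n) (h x : R) :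
    (fwdDiff h)^[n] (fun t : R => t ^ j) x = 0 := by
  let P : Polynomial R := (Polynomial.C h * Polynomial.X + Polynomial.C x) ^ j
  have hP : P.natDegree < n := by
    refine lt_of_le_of_lt ?_ hj
    simpa using
      Polynomial.natDegree_pow_le_of_le j (Polynomial.natDegree_linear_le (a := h) (b := x))
  have hPeval : P.eval = fun s => (x + AddMonoidHom.mulLeft h s) ^ j := by
    ext s
    simp [P, add_comm]
  have hzero := congrFun (Polynomial.fwdDiff_iter_eq_zero_of_degree_lt hP) 0
  rw [hPeval, fwdDiff_iter_comp_affine _ _ (fun t : R => t ^ j)] at hzero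
  simpa using hzero

lemma fwdDiff_iter_two_mul_cos (K : ℕ) (h x : ℝ) :
    (fwdDiff h)^[2 * K] Real.cos (x - K * h) = (2 * Real.cos h - 2) ^ K * Real.cos x := by
  induction K generalizing x with
  | zero => simp
  | succ K ih =>
    have hstep : (fwdDiff h)^[2 * (K + 1)] Real.cos (x - (K + 1 : ℕ) * h) =
        (fwdDiff h)^[2 * K] Real.cos (x + h - K * h) - 2 * (fwdDiff h)^[2 * K] Real.cos (x - K * h)
          + (fwdDiff h)^[2 * K] Real.cos (x - h - K * h) := by
      rw [mul_add_one, add_comm (2 * K), Function.iterate_add_apply]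
      simp only [Function.iterate_succ, Function.iterate_zero, Function.comp_apply, id, fwdDiff]
      push_cast
      ring_nf
    rw [hstep, ih, ih, ih, Real.cos_add, Real.cos_sub]
    ring

lemma fwdDiff_iter_cosRemainder {K M : ℕ} (hM : M ≤ K) (h x : ℝ) :
    (fwdDiff h)^[2 * K] (cosRemainder M) (x - K * h) =
      (-1) ^ M * ((2 * Real.cos h - 2) ^ K * Real.cos x) := by
  induction M with
  | zero => simpa [cosRemainder] using fwdDiff_iter_two_mul_cos K h x
  | succ M ih =>
    have hsplit : cosRemainder (M + 1) =
        (((2 * M).factorial : ℝ)⁻¹ • fun t : ℝ => t ^ (2 * M)) + (-1 : ℝ) • cosRemainder M := by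
      ext t
      simp only [cosRemainder, Pi.add_apply, Pi.smul_apply, smul_eq_mul]
      ring
    rw [hsplit, fwdDiff_iter_add, fwdDiff_iter_const_smul, fwdDiff_iter_const_smul]
    simp only [Pi.add_apply, Pi.smul_apply, smul_eq_mul]
    rw [fwdDiff_iter_pow_eq_zero (by omega), ih (by omega)]
    ring

lemma fwdDiff_iter_self_cosRemainder (K : ℕ) (h x : ℝ) :
    (fwdDiff h)^[2 * K] (cosRemainder K) (x - K * h) = (2 - 2 * Real.cos h) ^ K * Real.cos x := by
  rw [fwdDiff_iter_cosRemainder le_rfl, ← mul_assoc, ← mul_pow]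
  ring

lemma fwdDiff_iter_ae_eq {M G : Type*} [AddCommMonoid M] [AddCommGroup G] [MeasurableSpace M]
    [MeasurableAdd M] {ν : Measure M} [ν.IsAddRightInvariant] {f g : M → G}
    (hfg : f =ᵐ[ν] g) (h : M) (n : ℕ) :
    (fwdDiff h)^[n] f =ᵐ[ν] (fwdDiff h)^[n] g := by
  have hshift (k : ℕ) : ∀ᵐ x ∂ν, f (x + k • h) = g (x + k • h) :=
    (measurePreserving_add_right ν (k • h)).quasiMeasurePreserving.ae hfg
  filter_upwards [ae_all_iff.2 hshift] with x hx
  simp only [fwdDiff_iter_eq_sum_shift, hx]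

lemma fwdDiff_iter_add_const {M G : Type*} [AddCommMonoid M] [AddCommGroup G] (f : M → G) (c : G)
    (h : M) {n : ℕ} (hn : n ≠ 0) : (fwdDiff h)^[n] (fun y => f y + c) = (fwdDiff h)^[n] f := by
  obtain ⟨k, rfl⟩ := Nat.exists_eq_succ_of_ne_zero hn
  rw [Function.iterate_succ_apply, Function.iterate_succ_apply]
  congr 1
  ext x
  simp [fwdDiff]

variable {α E G : Type*} [MeasurableSpace α] [NormedAddCommGroup G] [NormedSpace ℝ G]
  [AddCommGroup E] {μ : Measure α} {F : E → α → G}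

lemma integrable_fwdDiff_iter (hF : ∀ y, Integrable (F y) μ) (h : E) (n : ℕ) (x : E) :
    Integrable (fun a => (fwdDiff h)^[n] (fun y => F y a) x) μ := by
  simp only [fwdDiff_iter_eq_sum_shift, ← Int.cast_smul_eq_zsmul ℝ]
  exact integrable_finsetSum _ fun k _ => (hF _).smul _

lemma fwdDiff_iter_integral_s9 (hF : ∀ y, Integrable (F y) μ) (h : E) (n : ℕ) (x : E) :
    (fwdDiff h)^[n] (fun y => ∫ a, F y a ∂μ) x = ∫ a, (fwdDiff h)^[n] (fun y => F y a) x ∂μ := by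
  simp only [fwdDiff_iter_eq_sum_shift, ← Int.cast_smul_eq_zsmul ℝ]
  rw [integral_finsetSum _ fun k _ => by exact (hF _).smul _]
  simp only [integral_smul]

end ForwardDifference

section RieszKernel

open Module (finrank)
open scoped RealInnerProductSpace

variable {E : Type*} [NormedAddCommGroup E] [InnerProductSpace ℝ E] [FiniteDimensional ℝ E]
  [MeasurableSpace E] [BorelSpace E] {p : ℝ} {M : ℕ}

lemma pow_smul_pow_mul_rpow {d : ℕ} (hd : d ≠ 0) (k : ℕ) (p : ℝ) {r : ℝ} (hr : 0 < r) :
    r ^ (d - 1) • (r ^ k * r ^ (-p - d)) = r ^ (k - 1 - p : ℝ) := by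
  rw [smul_eq_mul, ← Real.rpow_natCast, ← Real.rpow_natCast, ← Real.rpow_add hr, ← Real.rpow_add hr,
    Nat.cast_pred (Nat.pos_of_ne_zero hd)]
  ring_nf

lemma integrable_min_pow_mul_rpow_norm [Nontrivial E] {j k : ℕ} (hj : j < p) (hk : p < k) :
    Integrable fun z : E => min (‖z‖ ^ j) (‖z‖ ^ k) * ‖z‖ ^ (-p - finrank ℝ E) := by
  have hd : finrank ℝ E ≠ 0 := Module.finrank_pos.ne'
  refine (integrable_fun_norm_addHaar volume
    (f := fun r : ℝ => min (r ^ j) (r ^ k) * r ^ (-p - finrank ℝ E))).2 ?_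
  have hdom (s : Set ℝ) (hs : MeasurableSet s) (hs0 : ∀ r ∈ s, 0 < r) (i : ℕ)
      (hi : IntegrableOn (fun r : ℝ => r ^ (i - 1 - p : ℝ)) s)
      (hmin : ∀ r : ℝ, min (r ^ j) (r ^ k) ≤ r ^ i) :
      IntegrableOn (fun r : ℝ => r ^ (finrank ℝ E - 1) •
        (min (r ^ j) (r ^ k) * r ^ (-p - finrank ℝ E))) s := by
    refine Integrable.mono' hi (Measurable.aestronglyMeasurable (by fun_prop)) ?_
    filter_upwards [ae_restrict_mem hs] with r hr
    have hr0 := hs0 r hr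
    rw [Real.norm_of_nonneg (by positivity), ← pow_smul_pow_mul_rpow hd i p hr0]
    gcongr
    exact hmin r
  rw [← Set.Ioc_union_Ioi_eq_Ioi (zero_le_one (α := ℝ))]
  refine (hdom _ measurableSet_Ioc (fun r hr => hr.1) k ?_ fun r => min_le_right _ _).union
    (hdom _ measurableSet_Ioi (fun r hr => one_pos.trans hr) j ?_ fun r => min_le_left _ _)
  · rw [← intervalIntegrable_iff_integrableOn_Ioc_of_le zero_le_one]
    exact intervalIntegral.intervalIntegrable_rpow' (by linarith)
  · exact integrableOn_Ioi_rpow_of_lt (by linarith) one_pos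

lemma min_mul_pow_le {a b : ℝ} (ha : 0 ≤ a) (hb : 0 ≤ b) (j k : ℕ) :
    min ((a * b) ^ j) ((a * b) ^ k) ≤ max (a ^ j) (a ^ k) * min (b ^ j) (b ^ k) := by
  rw [mul_min_of_nonneg _ _ (by positivity), mul_pow, mul_pow]
  gcongr
  · exact le_max_left _ _
  · exact le_max_right _ _

lemma integrable_cosRemainder_inner_mul [Nontrivial E] (hM : 2 * M < p) (hM' : p < 2 * (M + 1))
    (x : E) :
    Integrable fun z : E => cosRemainder (M + 1) ⟪x, z⟫ * ‖z‖ ^ (-p - finrank ℝ E) := by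
  have hdom := integrable_min_pow_mul_rpow_norm (E := E) (j := 2 * M) (k := 2 * (M + 1))
    (by exact_mod_cast hM) (by exact_mod_cast hM')
  refine (hdom.const_mul (2 * max (‖x‖ ^ (2 * M)) (‖x‖ ^ (2 * (M + 1))))).mono'
    (((continuous_cosRemainder _).comp (by fun_prop)).measurable.mul
      (by fun_prop)).aestronglyMeasurable (.of_forall fun z => ?_)
  have hinner : |⟪x, z⟫| ≤ ‖x‖ * ‖z‖ := abs_real_inner_le_norm x z
  rw [Real.norm_of_nonneg (mul_nonneg (cosRemainder_succ_nonneg _ _) (by positivity)), ← mul_assoc]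
  gcongr
  calc cosRemainder (M + 1) ⟪x, z⟫
      ≤ 2 * min ((‖x‖ * ‖z‖) ^ (2 * M)) ((‖x‖ * ‖z‖) ^ (2 * (M + 1))) :=
        (cosRemainder_succ_le_min M _).trans (by gcongr)
    _ ≤ _ := by
        rw [mul_assoc]
        gcongr
        exact min_mul_pow_le (norm_nonneg x) (norm_nonneg z) _ _

lemma integral_inner_norm_eq_of_norm_eq {G : Type*} [NormedAddCommGroup G]
    [NormedSpace ℝ G] (F : ℝ → ℝ → G) {x y : E} (hxy : ‖x‖ = ‖y‖) :
    ∫ z, F ⟪x, z⟫ ‖z‖ = ∫ z, F ⟪y, z⟫ ‖z‖ := by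
  let T := (ℝ ∙ (x - y))ᗮ.reflection
  have hT : T x = y := Submodule.reflection_sub hxy
  rw [← T.measurePreserving.integral_comp T.toHomeomorph.measurableEmbedding
    (fun z => F ⟪y, z⟫ ‖z‖)]
  simp only [← hT, LinearIsometryEquiv.inner_map_map, LinearIsometryEquiv.norm_map]

lemma integral_cosRemainder_inner_smul (M : ℕ) (p : ℝ) (x : E) {c : ℝ} (hc : 0 < c) :
    ∫ z, cosRemainder M ⟪c • x, z⟫ * ‖z‖ ^ (-p - finrank ℝ E) =
      c ^ p * ∫ z, cosRemainder M ⟪x, z⟫ * ‖z‖ ^ (-p - finrank ℝ E) := by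
  have hscale (z : E) : cosRemainder M ⟪c • x, z⟫ * ‖z‖ ^ (-p - finrank ℝ E) =
      c ^ (p + finrank ℝ E) * (cosRemainder M ⟪x, c • z⟫ * ‖c • z‖ ^ (-p - finrank ℝ E)) := by
    rw [real_inner_smul_left, real_inner_smul_right, norm_smul, Real.norm_of_nonneg hc.le,
      Real.mul_rpow hc.le (norm_nonneg z), mul_left_comm, ← mul_assoc (c ^ _), ← Real.rpow_add hc]
    simp
  simp_rw [hscale]
  rw [integral_const_mul, Measure.integral_comp_smul volume
    (fun z => cosRemainder M ⟪x, z⟫ * ‖z‖ ^ (-p - finrank ℝ E)), smul_eq_mul, ← mul_assoc,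
    abs_of_pos (by positivity), Real.rpow_add hc, Real.rpow_natCast, mul_assoc (c ^ p),
    mul_inv_cancel₀ (by positivity), mul_one]

lemma exists_integral_cosRemainder_inner_eq [Nontrivial E] (hp : p ≠ 0) (M : ℕ) :
    ∃ A : ℝ, ∀ x : E, ∫ z, cosRemainder (M + 1) ⟪x, z⟫ * ‖z‖ ^ (-p - finrank ℝ E) =
      A * ‖x‖ ^ p := by
  obtain ⟨e, he⟩ := exists_norm_eq E (zero_le_one (α := ℝ))
  refine ⟨∫ z, cosRemainder (M + 1) ⟪e, z⟫ * ‖z‖ ^ (-p - finrank ℝ E), fun x => ?_⟩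
  rcases eq_or_ne x 0 with rfl | hx
  · simp [cosRemainder_succ_zero, Real.zero_rpow hp]
  · have hnorm : ‖x‖ = ‖‖x‖ • e‖ := by simp [norm_smul, he]
    rw [integral_inner_norm_eq_of_norm_eq
      (fun s r => cosRemainder (M + 1) s * r ^ (-p - finrank ℝ E)) hnorm,
      integral_cosRemainder_inner_smul _ _ _ (norm_pos_iff.2 hx), mul_comm]

end RieszKernel

section DifferenceMultiplier

open Module (finrank)
open scoped RealInnerProductSpace

variable {E : Type*} [NormedAddCommGroup E] [InnerProductSpace ℝ E]

/-- Up to a constant, the Fourier transform of the central difference of order `2 * K` with step `h`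
of the function `x ↦ ‖x‖ ^ p`, in the sense of `exists_integral_exp_inner_mul_diffMultiplier_eq`. -/
noncomputable def diffMultiplier (K : ℕ) (p : ℝ) (h z : E) : ℝ :=
  (2 - 2 * Real.cos ⟪h, z⟫) ^ K * ‖z‖ ^ (-p - finrank ℝ E)

lemma diffMultiplier_neg (K : ℕ) (p : ℝ) (h z : E) :
    diffMultiplier K p h (-z) = diffMultiplier K p h z := by
  simp only [diffMultiplier, inner_neg_right, Real.cos_neg, norm_neg]

lemma continuousAt_diffMultiplier (K : ℕ) (p : ℝ) (h : E) {z : E} (hz : z ≠ 0) :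
    ContinuousAt (diffMultiplier K p h) z := by
  unfold diffMultiplier
  exact ContinuousAt.mul (by fun_prop)
    (continuousAt_id.norm.rpow_const (.inl (norm_ne_zero_iff.2 hz)))

lemma exists_diffMultiplier_ne_zero (K : ℕ) (p : ℝ) {z : E} (hz : z ≠ 0) :
    ∃ h : E, diffMultiplier K p h z ≠ 0 := by
  have hz0 : 0 < ‖z‖ := norm_pos_iff.2 hz
  refine ⟨((‖z‖ ^ 2)⁻¹ : ℝ) • z, mul_ne_zero (pow_ne_zero _ ?_) (Real.rpow_pos_of_pos hz0 _).ne'⟩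
  rw [real_inner_smul_left, real_inner_self_eq_norm_sq, inv_mul_cancel₀ (by positivity)]
  linarith [Real.cos_one_le]

lemma fwdDiff_iter_cosRemainder_inner (K : ℕ) (p : ℝ) (h x z : E) :
    (fwdDiff h)^[2 * K] (fun y => cosRemainder K ⟪y, z⟫ * ‖z‖ ^ (-p - finrank ℝ E)) (x - K • h) =
      Real.cos ⟪x, z⟫ * diffMultiplier K p h z := by
  let L : E →+ ℝ := (innerₛₗ ℝ z).toAddMonoidHom
  have hL (y : E) : ⟪y, z⟫ = 0 + L y := by simp [L, real_inner_comm]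
  have hsmul : (fun y => cosRemainder K ⟪y, z⟫ * ‖z‖ ^ (-p - finrank ℝ E)) =
      (‖z‖ ^ (-p - finrank ℝ E)) • fun y => cosRemainder K (0 + L y) := by
    ext y
    simp [hL, mul_comm]
  rw [hsmul, fwdDiff_iter_const_smul, Pi.smul_apply, fwdDiff_iter_comp_affine, map_sub, map_nsmul,
    nsmul_eq_mul, zero_add, fwdDiff_iter_self_cosRemainder, diffMultiplier, hL, hL, zero_add,
    zero_add, smul_eq_mul]
  ring

variable [FiniteDimensional ℝ E] [MeasurableSpace E] [BorelSpace E] {p : ℝ} {M : ℕ}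

lemma integrable_diffMultiplier [Nontrivial E] (hM : 2 * M < p) (hM' : p < 2 * (M + 1)) (h : E) :
    Integrable (diffMultiplier (M + 1) p h) := by
  have hint := integrable_fwdDiff_iter (integrable_cosRemainder_inner_mul (E := E) hM hM') h
    (2 * (M + 1)) (0 - (M + 1) • h)
  simpa only [fwdDiff_iter_cosRemainder_inner, inner_zero_left, Real.cos_zero, one_mul] using hint

lemma integrable_exp_inner_mul {g : E → ℂ} (hg : Integrable g) (x : E) :
    Integrable fun z : E => Complex.exp (⟪x, z⟫ * Complex.I) * g z :=
  hg.bdd_mul (c := 1) (by fun_prop) (.of_forall fun z => (Complex.norm_exp_ofReal_mul_I _).le)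

lemma integral_exp_inner_mul_of_even {g : E → ℝ} (hg : Integrable g) (hneg : ∀ z, g (-z) = g z)
    (x : E) :
    ∫ z, Complex.exp (⟪x, z⟫ * Complex.I) * g z = (∫ z, Real.cos ⟪x, z⟫ * g z : ℝ) := by
  let f : E → ℂ := fun z => Complex.exp (⟪x, z⟫ * Complex.I) * g z
  have hf : Integrable f := integrable_exp_inner_mul hg.ofReal x
  have hsum (z : E) : f z + f (-z) = 2 * ((Real.cos ⟪x, z⟫ * g z : ℝ) : ℂ) := by
    simp only [f, hneg, inner_neg_right, Complex.ofReal_neg, Complex.ofReal_mul, Complex.ofReal_cos,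
      Complex.cos]
    ring_nf
  have htwo : 2 * ∫ z, f z = 2 * ((∫ z, Real.cos ⟪x, z⟫ * g z : ℝ) : ℂ) :=
    calc 2 * ∫ z, f z = ∫ z, (f z + f (-z)) := by
          rw [integral_add hf hf.comp_neg, integral_neg_eq_self, two_mul]
      _ = 2 * ((∫ z, Real.cos ⟪x, z⟫ * g z : ℝ) : ℂ) := by
          simp only [hsum, integral_const_mul, integral_complex_ofReal]
  exact mul_left_cancel₀ two_ne_zero htwo

lemma exists_integral_exp_inner_mul_diffMultiplier_eq [Nontrivial E] (hM : 2 * M < p)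
    (hM' : p < 2 * (M + 1)) :
    ∃ A : ℝ, ∀ h x : E, ∫ z, Complex.exp (⟪x, z⟫ * Complex.I) * diffMultiplier (M + 1) p h z =
      (A * (fwdDiff h)^[2 * (M + 1)] (fun y => ‖y‖ ^ p) (x - (M + 1) • h) : ℝ) := by
  have hp : 0 < p := lt_of_le_of_lt (by positivity) hM
  obtain ⟨A, hA⟩ := exists_integral_cosRemainder_inner_eq (E := E) hp.ne' M
  refine ⟨A, fun h x => ?_⟩
  rw [integral_exp_inner_mul_of_even (integrable_diffMultiplier hM hM' h)
    (diffMultiplier_neg _ _ h)]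
  simp only [← fwdDiff_iter_cosRemainder_inner]
  rw [← fwdDiff_iter_integral_s9 (integrable_cosRemainder_inner_mul hM hM')]
  simp only [hA]
  exact congrArg _ (congrFun (fwdDiff_iter_const_smul h A (fun y : E => ‖y‖ ^ p) _) _)

lemma eq_zero_of_integral_exp_inner_mul_ae_eq_zero {g : E → ℂ} (hg : Integrable g)
    (hzero : ∀ᵐ x : E, ∫ z, Complex.exp (⟪x, z⟫ * Complex.I) * g z = 0) {z : E}
    (hz : ContinuousAt g z) : g z = 0 := by
  have hfourier : FourierTransform.fourier g =ᵐ[volume] 0 := by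
    have hπ : -2 * Real.pi ≠ 0 := mul_ne_zero (by norm_num) Real.pi_ne_zero
    filter_upwards [(Measure.quasiMeasurePreserving_smul volume hπ).ae hzero] with w hw
    simpa only [Real.fourier_eq', real_inner_smul_left, real_inner_comm w, smul_eq_mul,
      Pi.zero_apply] using hw
  rw [← hg.fourierInv_fourier_eq ((integrable_zero _ _ _).congr hfourier.symm) hz,
    Real.fourierInv_eq']
  refine integral_eq_zero_of_ae ?_
  filter_upwards [hfourier] with w hw
  simp [hw]

end DifferenceMultiplier

section Moments

open scoped RealInnerProductSpace

lemma integrable_norm_rpow_of_memLp {α E : Type*} [MeasurableSpace α] [NormedAddCommGroup E]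
    {μ : Measure α} {f : α → E} {p : ℝ} (hp : 0 < p) (hf : MemLp f (ENNReal.ofReal p) μ) :
    Integrable (fun a => ‖f a‖ ^ p) μ := by
  simpa [ENNReal.toReal_ofReal hp.le] using
    hf.integrable_norm_rpow (by simpa) ENNReal.ofReal_ne_top

variable {E : Type*} [NormedAddCommGroup E] [InnerProductSpace ℝ E] [FiniteDimensional ℝ E]
  [MeasurableSpace E] [BorelSpace E] {p : ℝ} {M : ℕ}

lemma integral_integral_exp_inner_add_mul (μ : Measure E) [IsFiniteMeasure μ] {g : E → ℂ}
    (hg : Integrable g) (x : E) :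
    ∫ w, ∫ z, Complex.exp (⟪x + w, z⟫ * Complex.I) * g z ∂volume ∂μ =
      ∫ z, Complex.exp (⟪x, z⟫ * Complex.I) * (g z * charFun μ z) := by
  have hint : Integrable (fun q : E × E => Complex.exp (⟪x + q.1, q.2⟫ * Complex.I) * g q.2)
      (μ.prod volume) :=
    (hg.comp_snd μ).bdd_mul (c := 1) (Measurable.aestronglyMeasurable (by fun_prop))
      (.of_forall fun q => (Complex.norm_exp_ofReal_mul_I _).le)
  rw [integral_integral_swap hint]
  congr with z
  rw [charFun_apply, ← integral_const_mul, ← integral_const_mul]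
  congr with w
  rw [inner_add_left, Complex.ofReal_add, add_mul, Complex.exp_add]
  ring

lemma exists_integral_exp_inner_mul_charFun_eq [Nontrivial E] (hM : 2 * M < p)
    (hM' : p < 2 * (M + 1)) :
    ∃ A : ℝ, ∀ (μ : Measure E) [IsFiniteMeasure μ], MemLp id (ENNReal.ofReal p) μ → ∀ h x : E,
      ∫ z, Complex.exp (⟪x, z⟫ * Complex.I) * (diffMultiplier (M + 1) p h z * charFun μ z) =
        (A * (fwdDiff h)^[2 * (M + 1)] (fun y => ∫ w, ‖y + w‖ ^ p ∂μ) (x - (M + 1) • h) : ℝ) := by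
  obtain ⟨A, hA⟩ := exists_integral_exp_inner_mul_diffMultiplier_eq (E := E) hM hM'
  have hp : 0 < p := lt_of_le_of_lt (by positivity) hM
  have hm (h : E) : Integrable fun z => (diffMultiplier (M + 1) p h z : ℂ) :=
    (integrable_diffMultiplier hM hM' h).ofReal
  refine ⟨A, fun μ _ hμ h x => ?_⟩
  have hshift (w : E) : (fwdDiff h)^[2 * (M + 1)] (fun y => ‖y + w‖ ^ p) (x - (M + 1) • h) =
      (fwdDiff h)^[2 * (M + 1)] (fun y => ‖y‖ ^ p) (x + w - (M + 1) • h) := by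
    simpa only [AddMonoidHom.id_apply, add_comm w, sub_add_eq_add_sub] using
      fwdDiff_iter_comp_affine (AddMonoidHom.id E) w (fun y => ‖y‖ ^ p) h (2 * (M + 1))
        (x - (M + 1) • h)
  have hint (y : E) : Integrable (fun w => ‖y + w‖ ^ p) μ :=
    integrable_norm_rpow_of_memLp hp ((memLp_const y).add hμ)
  rw [← integral_integral_exp_inner_add_mul μ (hm h),
    fwdDiff_iter_integral_s9 hint, ← integral_const_mul,
    ← integral_complex_ofReal]
  simp only [hA, hshift]

lemma exists_two_mul_lt_lt_two_mul_add_one (hp : 0 ≤ p) (hpe : ∀ k : ℕ, p ≠ 2 * k) :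
    ∃ M : ℕ, 2 * M < p ∧ p < 2 * (M + 1) := by
  refine ⟨⌊p / 2⌋₊, lt_of_le_of_ne ?_ (hpe _).symm, ?_⟩
  · linarith [Nat.floor_le (div_nonneg hp zero_le_two)]
  · linarith [Nat.lt_floor_add_one (p / 2)]

lemma integrable_mul_charFun (μ : Measure E) [IsFiniteMeasure μ] {g : E → ℂ} (hg : Integrable g) :
    Integrable fun z => g z * charFun μ z :=
  hg.mul_bdd continuous_charFun.aestronglyMeasurable
    (.of_forall fun z => norm_charFun_le z)

lemma charFun_eq_of_integral_norm_add_rpow_ae_eq [Nontrivial E] (hp : 0 < p)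
    (hpe : ∀ k : ℕ, p ≠ 2 * k) {μ ν : Measure E} [IsFiniteMeasure μ] [IsFiniteMeasure ν]
    (hμ : MemLp id (ENNReal.ofReal p) μ) (hν : MemLp id (ENNReal.ofReal p) ν) {c : ℝ}
    (hmoment : ∀ᵐ y, ∫ w, ‖y + w‖ ^ p ∂μ = ∫ w, ‖y + w‖ ^ p ∂ν + c) {z : E} (hz : z ≠ 0) :
    charFun μ z = charFun ν z := by
  obtain ⟨M, hM, hM'⟩ := exists_two_mul_lt_lt_two_mul_add_one hp.le hpe
  obtain ⟨A, hA⟩ := exists_integral_exp_inner_mul_charFun_eq (E := E) hM hM'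
  obtain ⟨h, hh⟩ := exists_diffMultiplier_ne_zero (M + 1) p hz
  have hm : Integrable fun v => (diffMultiplier (M + 1) p h v : ℂ) :=
    (integrable_diffMultiplier hM hM' h).ofReal
  have hdiff : ∀ᵐ x : E,
      (fwdDiff h)^[2 * (M + 1)] (fun y => ∫ w, ‖y + w‖ ^ p ∂μ) (x - (M + 1) • h) =
        (fwdDiff h)^[2 * (M + 1)] (fun y => ∫ w, ‖y + w‖ ^ p ∂ν) (x - (M + 1) • h) := by
    have hae := fwdDiff_iter_ae_eq hmoment h (2 * (M + 1))
    rw [fwdDiff_iter_add_const _ _ _ (by positivity)] at hae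
    exact (measurePreserving_sub_right volume ((M + 1) • h)).quasiMeasurePreserving.ae hae
  have hzero : (diffMultiplier (M + 1) p h z : ℂ) * charFun μ z -
      diffMultiplier (M + 1) p h z * charFun ν z = 0 := by
    refine eq_zero_of_integral_exp_inner_mul_ae_eq_zero
      (g := fun v => diffMultiplier (M + 1) p h v * charFun μ v -
        diffMultiplier (M + 1) p h v * charFun ν v)
      ((integrable_mul_charFun μ hm).sub (integrable_mul_charFun ν hm)) ?_ ?_
    · filter_upwards [hdiff] with x hx
      simp only [mul_sub]
      rw [integral_sub (integrable_exp_inner_mul (integrable_mul_charFun μ hm) x)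
        (integrable_exp_inner_mul (integrable_mul_charFun ν hm) x), hA μ hμ, hA ν hν, hx, sub_self]
    · have hcont := Complex.continuous_ofReal.continuousAt.comp
        (continuousAt_diffMultiplier (M + 1) p h hz)
      exact (hcont.mul continuous_charFun.continuousAt).sub
        (hcont.mul continuous_charFun.continuousAt)
  rw [← mul_sub] at hzero
  exact sub_eq_zero.1 ((mul_eq_zero.1 hzero).resolve_left (Complex.ofReal_ne_zero.2 hh))

theorem measure_eq_of_integral_norm_add_rpow_ae_eq [Nontrivial E] (hp : 0 < p)
    (hpe : ∀ k : ℕ, p ≠ 2 * k) {μ ν : Measure E} [IsFiniteMeasure μ] [IsFiniteMeasure ν]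
    (hμ : MemLp id (ENNReal.ofReal p) μ) (hν : MemLp id (ENNReal.ofReal p) ν) {c : ℝ}
    (hmoment : ∀ᵐ y, ∫ w, ‖y + w‖ ^ p ∂μ = ∫ w, ‖y + w‖ ^ p ∂ν + c) : μ = ν :=
  Measure.ext_of_charFun <| continuous_charFun.ext_on (dense_compl_singleton 0) continuous_charFun
    fun _ hz => charFun_eq_of_integral_norm_add_rpow_ae_eq hp hpe hμ hν hmoment hz

end Moments

section CramerWold

lemma measure_ext_of_map_strongDual (𝕜 : Type*) {E : Type*} [RCLike 𝕜] [MeasurableSpace 𝕜]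
    [BorelSpace 𝕜] [NormedAddCommGroup E] [NormedSpace ℝ E] [NormedSpace 𝕜 E] [IsScalarTower ℝ 𝕜 E]
    [CompleteSpace E] [SecondCountableTopology E] [MeasurableSpace E] [BorelSpace E]
    {μ ν : Measure E} [IsFiniteMeasure μ] [IsFiniteMeasure ν]
    (h : ∀ L : StrongDual 𝕜 E, μ.map L = ν.map L) : μ = ν := by
  refine Measure.ext_of_charFunDual (funext fun ℓ => ?_)
  have hre (ρ : Measure E) : charFunDual ρ ℓ =
      ∫ w, Complex.exp (RCLike.re w * Complex.I) ∂ρ.map (ℓ.extendRCLike : StrongDual 𝕜 E) := by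
    rw [integral_map (by fun_prop) (Measurable.aestronglyMeasurable (by fun_prop)),
      charFunDual_apply]
    simp only [StrongDual.re_extendRCLike_apply]
  rw [hre, hre, h]

end CramerWold

section WeightedMeasure

variable {Ω 𝕜 : Type*} [MeasurableSpace Ω] [RCLike 𝕜] {μ : Measure Ω} {p : ℝ} {f g : Ω → 𝕜}

/-- The measure `|f|ᵖ dμ`. -/
noncomputable def normRpowMeasure (μ : Measure Ω) (p : ℝ) (f : Ω → 𝕜) : Measure Ω :=
  μ.withDensity fun z => ENNReal.ofReal (‖f z‖ ^ p)

lemma isFiniteMeasure_normRpowMeasure (hp : 0 < p) (hf : MemLp f (ENNReal.ofReal p) μ) :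
    IsFiniteMeasure (normRpowMeasure μ p f) :=
  isFiniteMeasure_withDensity_ofReal (integrable_norm_rpow_of_memLp hp hf).2

lemma aemeasurable_ofReal_norm_rpow (p : ℝ) (hf : AEStronglyMeasurable f μ) :
    AEMeasurable (fun z => ENNReal.ofReal (‖f z‖ ^ p)) μ :=
  (hf.norm.aemeasurable.pow_const p).ennreal_ofReal

lemma integral_normRpowMeasure (hf : AEStronglyMeasurable f μ) (F : Ω → ℝ) :
    ∫ z, F z ∂normRpowMeasure μ p f = ∫ z, ‖f z‖ ^ p * F z ∂μ := by
  rw [normRpowMeasure, integral_withDensity_eq_integral_toReal_smul₀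
    (aemeasurable_ofReal_norm_rpow p hf) (.of_forall fun _ => ENNReal.ofReal_lt_top)]
  simp only [ENNReal.toReal_ofReal (Real.rpow_nonneg (norm_nonneg _) _), smul_eq_mul]

lemma aemeasurable_div_normRpowMeasure [MeasurableSpace 𝕜] [BorelSpace 𝕜]
    (hf : AEStronglyMeasurable f μ) (hg : AEStronglyMeasurable g μ) :
    AEMeasurable (fun z => g z / f z) (normRpowMeasure μ p f) :=
  (hg.aemeasurable.div hf.aemeasurable).mono_ac (withDensity_absolutelyContinuous _ _)

lemma norm_rpow_mul_norm_add_div_rpow (p : ℝ) {a : 𝕜} (ha : a ≠ 0) (b y : 𝕜) :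
    ‖a‖ ^ p * ‖y + b / a‖ ^ p = ‖y * a + b‖ ^ p := by
  rw [← Real.mul_rpow (norm_nonneg _) (norm_nonneg _), ← norm_mul, mul_add, mul_div_cancel₀ b ha,
    mul_comm y]

lemma integral_norm_mul_add_rpow (μ : Measure Ω) (p : ℝ) (f g : Ω → 𝕜) {y : 𝕜} (hy : y ≠ 0) :
    ∫ z, ‖y * f z + g z‖ ^ p ∂μ = ‖y‖ ^ p * ∫ z, ‖f z + y⁻¹ * g z‖ ^ p ∂μ := by
  rw [← integral_const_mul]
  congr with z
  rw [← Real.mul_rpow (norm_nonneg _) (norm_nonneg _), ← norm_mul, mul_add, mul_inv_cancel_left₀ hy]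

lemma lintegral_map_normRpowMeasure {X : Type*} [MeasurableSpace X] (hf : AEStronglyMeasurable f μ)
    {F : Ω → X} (hF : AEMeasurable F (normRpowMeasure μ p f)) {u : X → ENNReal}
    (hu : Measurable u) :
    ∫⁻ x, u x ∂(normRpowMeasure μ p f).map F =
      ∫⁻ z, u (F z) * ENNReal.ofReal (‖f z‖ ^ p) ∂μ := by
  rw [lintegral_map' hu.aemeasurable hF, normRpowMeasure,
    lintegral_withDensity_eq_lintegral_mul₀' (f := fun z => ENNReal.ofReal (‖f z‖ ^ p))
      (g := fun z => u (F z)) (aemeasurable_ofReal_norm_rpow p hf) (hu.comp_aemeasurable hF)]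
  simp only [Pi.mul_apply, mul_comm]

lemma memLp_div_normRpowMeasure (hp : 0 < p) (hf : MemLp f (ENNReal.ofReal p) μ)
    (hg : MemLp g (ENNReal.ofReal p) μ) :
    MemLp (fun z => g z / f z) (ENNReal.ofReal p) (normRpowMeasure μ p f) := by
  borelize 𝕜
  have hmeas := aemeasurable_div_normRpowMeasure (p := p) hf.1 hg.1
  rw [← integrable_norm_rpow_iff hmeas.aestronglyMeasurable (by simpa) ENNReal.ofReal_ne_top,
    ENNReal.toReal_ofReal hp.le, normRpowMeasure, integrable_withDensity_iff_integrable_smul₀'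
    (aemeasurable_ofReal_norm_rpow p hf.1) (.of_forall fun _ => ENNReal.ofReal_lt_top)]
  simp only [ENNReal.toReal_ofReal (Real.rpow_nonneg (norm_nonneg _) _), smul_eq_mul]
  refine (integrable_norm_rpow_of_memLp hp hg).mono' ((hf.1.norm.aemeasurable.pow_const p).mul
    ((hg.1.aemeasurable.div hf.1.aemeasurable).norm.pow_const p)).aestronglyMeasurable
    (.of_forall fun z => ?_)
  rw [Real.norm_of_nonneg (by positivity)]
  rcases eq_or_ne (f z) 0 with hz | hz
  · rw [hz, norm_zero, Real.zero_rpow hp.ne', zero_mul]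
    positivity
  · simpa using (norm_rpow_mul_norm_add_div_rpow p hz (g z) 0).le

lemma integral_norm_add_div_rpow_normRpowMeasure (hp : 0 < p) (hf : MemLp f (ENNReal.ofReal p) μ)
    (hg : MemLp g (ENNReal.ofReal p) μ) (y : 𝕜) :
    ∫ z, ‖y + g z / f z‖ ^ p ∂normRpowMeasure μ p f =
      ∫ z, ‖y * f z + g z‖ ^ p ∂μ - ∫ z in {z | f z = 0}, ‖g z‖ ^ p ∂μ := by
  borelize 𝕜
  have hs : NullMeasurableSet {z | f z = 0} μ :=
    hf.1.aemeasurable.nullMeasurableSet_preimage (measurableSet_singleton 0)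
  have hint : Integrable (fun z => ‖y * f z + g z‖ ^ p) μ :=
    integrable_norm_rpow_of_memLp hp ((hf.const_mul y).add hg)
  have hzero : ∫ z in {z | f z = 0}, ‖y * f z + g z‖ ^ p ∂μ = ∫ z in {z | f z = 0}, ‖g z‖ ^ p ∂μ :=
    setIntegral_congr_fun₀ hs fun z hz => by simp only [show f z = 0 from hz, mul_zero, zero_add]
  have hcompl : ∫ z, ‖f z‖ ^ p * ‖y + g z / f z‖ ^ p ∂μ =
      ∫ z in {z | f z = 0}ᶜ, ‖y * f z + g z‖ ^ p ∂μ := by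
    rw [← setIntegral_eq_integral_of_forall_compl_eq_zero (s := {z | f z = 0}ᶜ) fun z hz => by
      simp [show f z = 0 from not_not.1 hz, Real.zero_rpow hp.ne']]
    exact setIntegral_congr_fun₀ hs.compl fun z hz => norm_rpow_mul_norm_add_div_rpow p hz _ _
  rw [integral_normRpowMeasure hf.1, hcompl, ← integral_add_compl₀ hs hint, hzero]
  ring

end WeightedMeasure

section Equimeasurability

variable {Ω₁ Ω₂ 𝕜 : Type*} [MeasurableSpace Ω₁] [MeasurableSpace Ω₂] [RCLike 𝕜]
  [MeasurableSpace 𝕜] [BorelSpace 𝕜] {μ : Measure Ω₁} {ν : Measure Ω₂} {p : ℝ}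

lemma map_div_normRpowMeasure_eq (hp : 0 < p) (hpe : ∀ k : ℕ, p ≠ 2 * k) {f₀ f : Ω₁ → 𝕜}
    {g₀ g : Ω₂ → 𝕜} (hf₀ : MemLp f₀ (ENNReal.ofReal p) μ) (hf : MemLp f (ENNReal.ofReal p) μ)
    (hg₀ : MemLp g₀ (ENNReal.ofReal p) ν) (hg : MemLp g (ENNReal.ofReal p) ν)
    (heq : ∀ a : 𝕜, ∫ z, ‖f₀ z + a * f z‖ ^ p ∂μ = ∫ w, ‖g₀ w + a * g w‖ ^ p ∂ν) :
    (normRpowMeasure μ p f₀).map (fun z => f z / f₀ z) =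
      (normRpowMeasure ν p g₀).map fun w => g w / g₀ w := by
  have := isFiniteMeasure_normRpowMeasure hp hf₀
  have := isFiniteMeasure_normRpowMeasure hp hg₀
  have hfm := aemeasurable_div_normRpowMeasure (p := p) hf₀.1 hf.1
  have hgm := aemeasurable_div_normRpowMeasure (p := p) hg₀.1 hg.1
  refine measure_eq_of_integral_norm_add_rpow_ae_eq hp hpe
    ((memLp_map_measure_iff (by fun_prop) hfm).2 (memLp_div_normRpowMeasure hp hf₀ hf))
    ((memLp_map_measure_iff (by fun_prop) hgm).2 (memLp_div_normRpowMeasure hp hg₀ hg))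
    (c := ∫ w in {w | g₀ w = 0}, ‖g w‖ ^ p ∂ν - ∫ z in {z | f₀ z = 0}, ‖f z‖ ^ p ∂μ) ?_
  filter_upwards [Measure.ae_ne volume 0] with y hy
  rw [integral_map hfm (Measurable.aestronglyMeasurable (by fun_prop)),
    integral_map hgm (Measurable.aestronglyMeasurable (by fun_prop)),
    integral_norm_add_div_rpow_normRpowMeasure hp hf₀ hf,
    integral_norm_add_div_rpow_normRpowMeasure hp hg₀ hg, integral_norm_mul_add_rpow μ p f₀ f hy,
    integral_norm_mul_add_rpow ν p g₀ g hy, heq]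
  ring

variable {ι : Type*}

lemma aemeasurable_tuple_div_normRpowMeasure [Countable ι] {f₀ : Ω₁ → 𝕜} {f : ι → Ω₁ → 𝕜}
    (hf₀ : AEStronglyMeasurable f₀ μ) (hf : ∀ k, AEStronglyMeasurable (f k) μ) :
    AEMeasurable (fun z k => f k z / f₀ z) (normRpowMeasure μ p f₀) :=
  aemeasurable_pi_lambda _ fun k => aemeasurable_div_normRpowMeasure hf₀ (hf k)

variable [Fintype ι]

lemma map_strongDual_map_tuple_div [DecidableEq ι] {f₀ : Ω₁ → 𝕜} {f : ι → Ω₁ → 𝕜}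
    (hf₀ : AEStronglyMeasurable f₀ μ) (hf : ∀ k, AEStronglyMeasurable (f k) μ)
    (L : StrongDual 𝕜 (ι → 𝕜)) :
    ((normRpowMeasure μ p f₀).map fun z k => f k z / f₀ z).map L =
      (normRpowMeasure μ p f₀).map
        fun z => (∑ k, L (Pi.single k 1) * f k z) / f₀ z := by
  rw [AEMeasurable.map_map_of_aemeasurable (by fun_prop)
    (aemeasurable_tuple_div_normRpowMeasure hf₀ hf)]
  congr with z
  have hsum : (fun k => f k z / f₀ z) = ∑ k, (f k z / f₀ z) • Pi.single k (1 : 𝕜) := by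
    simp [← Pi.single_smul, Finset.univ_sum_single]
  rw [Function.comp_apply, hsum, map_sum, Finset.sum_div]
  simp only [map_smul, smul_eq_mul, mul_comm (f _ z / f₀ z), mul_div_assoc]

theorem map_tuple_div_normRpowMeasure_eq (hp : 0 < p) (hpe : ∀ k : ℕ, p ≠ 2 * k) {f₀ : Ω₁ → 𝕜}
    {f : ι → Ω₁ → 𝕜} {g₀ : Ω₂ → 𝕜} {g : ι → Ω₂ → 𝕜} (hf₀ : MemLp f₀ (ENNReal.ofReal p) μ)
    (hf : ∀ k, MemLp (f k) (ENNReal.ofReal p) μ) (hg₀ : MemLp g₀ (ENNReal.ofReal p) ν)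
    (hg : ∀ k, MemLp (g k) (ENNReal.ofReal p) ν)
    (heq : ∀ α : ι → 𝕜, ∫ z, ‖f₀ z + ∑ k, α k * f k z‖ ^ p ∂μ =
      ∫ w, ‖g₀ w + ∑ k, α k * g k w‖ ^ p ∂ν) :
    (normRpowMeasure μ p f₀).map (fun z k => f k z / f₀ z) =
      (normRpowMeasure ν p g₀).map fun w k => g k w / g₀ w := by
  have := isFiniteMeasure_normRpowMeasure hp hf₀
  have := isFiniteMeasure_normRpowMeasure hp hg₀
  classical
  refine measure_ext_of_map_strongDual 𝕜 fun L => ?_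
  rw [map_strongDual_map_tuple_div hf₀.1 fun k => (hf k).1,
    map_strongDual_map_tuple_div hg₀.1 fun k => (hg k).1]
  refine map_div_normRpowMeasure_eq hp hpe hf₀ (memLp_finsetSum _ fun k _ => (hf k).const_mul _)
    hg₀ (memLp_finsetSum _ fun k _ => (hg k).const_mul _) fun a => ?_
  simpa only [Finset.mul_sum, mul_assoc] using heq fun k => a * L (Pi.single k 1)

theorem equimeasurable_tuples_general (hp : 0 < p) (hpe : ∀ k : ℕ, p ≠ 2 * k) {f₀ : Ω₁ → 𝕜}
    {f : ι → Ω₁ → 𝕜} {g₀ : Ω₂ → 𝕜} {g : ι → Ω₂ → 𝕜} (hf₀ : MemLp f₀ (ENNReal.ofReal p) μ)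
    (hf : ∀ k, MemLp (f k) (ENNReal.ofReal p) μ) (hg₀ : MemLp g₀ (ENNReal.ofReal p) ν)
    (hg : ∀ k, MemLp (g k) (ENNReal.ofReal p) ν)
    (heq : ∀ α : ι → 𝕜, ∫ z, ‖f₀ z + ∑ k, α k * f k z‖ ^ p ∂μ =
      ∫ w, ‖g₀ w + ∑ k, α k * g k w‖ ^ p ∂ν)
    {u : (ι → 𝕜) → ENNReal} (hu : Measurable u) :
    ∫⁻ z, u (fun k => f k z / f₀ z) * ENNReal.ofReal (‖f₀ z‖ ^ p) ∂μ =
      ∫⁻ w, u (fun k => g k w / g₀ w) * ENNReal.ofReal (‖g₀ w‖ ^ p) ∂ν := by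
  rw [← lintegral_map_normRpowMeasure hf₀.1
      (aemeasurable_tuple_div_normRpowMeasure hf₀.1 fun k => (hf k).1) hu,
    ← lintegral_map_normRpowMeasure hg₀.1
      (aemeasurable_tuple_div_normRpowMeasure hg₀.1 fun k => (hg k).1) hu,
    map_tuple_div_normRpowMeasure_eq hp hpe hf₀ hf hg₀ hg heq]

end Equimeasurability

lemma apNorm_eq_apNorm_iff {n m : ℕ} {p : ℝ} (hp : p ≠ 0) {D₁ : Set (Fin n → ℂ)}
    {D₂ : Set (Fin m → ℂ)} {φ : (Fin n → ℂ) → ℂ} {ψ : (Fin m → ℂ) → ℂ} :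
    apNorm n p D₁ φ = apNorm m p D₂ ψ ↔ ∫ z in D₁, ‖φ z‖ ^ p = ∫ w in D₂, ‖ψ w‖ ^ p :=
  Real.rpow_left_inj (integral_nonneg fun _ => by positivity)
    (integral_nonneg fun _ => by positivity) (one_div_ne_zero hp)

lemma MemAp.memLp {n : ℕ} {p : ℝ} (hp : 0 < p) {D : Set (Fin n → ℂ)} (hD : IsOpen D)
    {φ : (Fin n → ℂ) → ℂ} (hφ : MemAp n p D φ) :
    MemLp φ (ENNReal.ofReal p) (volume.restrict D) := by
  rw [← integrable_norm_rpow_iff (hφ.1.continuousOn.aestronglyMeasurable hD.measurableSet)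
    (by simpa) ENNReal.ofReal_ne_top, ENNReal.toReal_ofReal hp.le]
  exact hφ.2

/-- equimeasurability for tuples of `A^p` functions with matching norms
of all affine combinations. -/
theorem equimeasurable_tuples (n m N : ℕ)
    (D₁ : Set (Fin n → ℂ)) (D₂ : Set (Fin m → ℂ))
    (hD₁ : IsOpen D₁) (hD₁c : IsConnected D₁) (hD₁b : Bornology.IsBounded D₁)
    (hD₂ : IsOpen D₂) (hD₂c : IsConnected D₂) (hD₂b : Bornology.IsBounded D₂)
    (p : ℝ) (hp : 0 < p) (hpe : ∀ k : ℕ, p ≠ 2 * k)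
    (φ : Fin (N + 1) → (Fin n → ℂ) → ℂ) (ψ : Fin (N + 1) → (Fin m → ℂ) → ℂ)
    (hφ : ∀ k, MemAp n p D₁ (φ k)) (hψ : ∀ k, MemAp m p D₂ (ψ k))
    (hφ0 : ∃ z ∈ D₁, φ 0 z ≠ 0) (hψ0 : ∃ w ∈ D₂, ψ 0 w ≠ 0)
    (heq : ∀ α : Fin N → ℂ,
      apNorm n p D₁ (fun z => φ 0 z + ∑ k : Fin N, α k * φ k.succ z) =
      apNorm m p D₂ (fun w => ψ 0 w + ∑ k : Fin N, α k * ψ k.succ w)) :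
    ∀ u : (Fin N → ℂ) → ENNReal, Measurable u →
      ∫⁻ z in D₁, u (fun k => φ k.succ z / φ 0 z) *
          ENNReal.ofReal (‖φ 0 z‖ ^ p) =
      ∫⁻ w in D₂, u (fun k => ψ k.succ w / ψ 0 w) *
          ENNReal.ofReal (‖ψ 0 w‖ ^ p) :=
  fun _ hu => equimeasurable_tuples_general (f := fun k : Fin N => φ k.succ)
    (g := fun k : Fin N => ψ k.succ) hp hpe ((hφ 0).memLp hp hD₁)
    (fun k => (hφ k.succ).memLp hp hD₁) ((hψ 0).memLp hp hD₂) (fun k => (hψ k.succ).memLp hp hD₂)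
    (fun α => (apNorm_eq_apNorm_iff hp.ne').1 (heq α)) hu
end

section
/- The domains D₁ = 𝔹 × Δ* × Δ and D₂ = 𝔹' × Δ × Δ in ℂ⁴ are not biholomorphic, where 𝔹 is the unit ball in ℂ², 𝔹' = 𝔹∖{z₁=0}, Δ the unit disc and Δ* the punctured unit disc; indeed dim Aut(D₁) = 12 > dim Aut(𝔹') + 6 ≥ dim Aut(D₂). -/
/-- `D₁ = 𝔹 × Δ* × Δ ⊂ ℂ⁴`, where `𝔹` is the unit ball of `ℂ²`. -/
def domD1 : Set ((ℂ × ℂ) × ℂ × ℂ) :=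
  {z | ‖z.1.1‖ ^ 2 + ‖z.1.2‖ ^ 2 < 1 ∧
       (0 < ‖z.2.1‖ ∧ ‖z.2.1‖ < 1) ∧ ‖z.2.2‖ < 1}

/-- `D₂ = 𝔹' × Δ × Δ ⊂ ℂ⁴`, where `𝔹' = 𝔹 ∖ {z₁ = 0}`. -/
def domD2 : Set ((ℂ × ℂ) × ℂ × ℂ) :=
  {z | (‖z.1.1‖ ^ 2 + ‖z.1.2‖ ^ 2 < 1 ∧ z.1.1 ≠ 0) ∧
       ‖z.2.1‖ < 1 ∧ ‖z.2.2‖ < 1}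

/-!
`D₁` and `D₂` are the unit ball `𝔹 × Δ × Δ` with one hyperplane removed. By Riemann's extension
theorem and the maximum principle a biholomorphism `D₁ → D₂` extends to an automorphism of
`𝔹 × Δ × Δ`, which carries the slice by the first hyperplane, `𝔹 × Δ`, onto the slice by the
second, `Δ³`. Since `Δ³` is homogeneous, the resulting map `𝔹 × Δ → Δ³` may be assumed to fix the
origin, and by the Schwarz lemma its derivative there is a linear isometry for the norms whose unit
balls these domains are. But a strictly convex space of dimension at least two, such as the
Euclidean `ℂ²`, does not embed isometrically into `ℂ³` with the sup norm.
-/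

open Set Filter Metric Topology
open scoped NNReal ComplexConjugate

section Holomorphic

variable {E F : Type*} [NormedAddCommGroup E] [NormedSpace ℂ E]
  [NormedAddCommGroup F] [NormedSpace ℂ F]

lemma exists_lipschitzOnWith_of_differentiableOn {f : E → F} {U : Set E} (hU : IsOpen U)
    (hf : DifferentiableOn ℂ f U) {p : E} (hp : p ∈ U) :
    ∃ K : ℝ≥0, ∃ r > 0, ball p r ⊆ U ∧ LipschitzOnWith K f (ball p r) := by
  obtain ⟨r, hr, hrf⟩ := Metric.mem_nhds_iff.1 <| Filter.inter_mem (hU.mem_nhds hp) <|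
    (hf.continuousOn.continuousAt (hU.mem_nhds hp)).preimage_mem_nhds (ball_mem_nhds (f p) one_pos)
  have fderiv_le : ∀ x ∈ ball p (r / 2), ‖fderiv ℂ f x‖ ≤ 2 / (r / 2) := by
    intro x hx
    have hsub : ball x (r / 2) ⊆ ball p r := ball_subset_ball' (by linarith [mem_ball.1 hx])
    refine Complex.norm_fderiv_le_div_of_mapsTo_ball
      (hf.mono (hsub.trans fun y hy => (hrf hy).1)) (fun y hy => ?_) (half_pos hr)
    have hy1 : dist (f y) (f p) < 1 := (hrf (hsub hy)).2
    have hx1 : dist (f x) (f p) < 1 := (hrf (hsub (mem_ball_self (half_pos hr)))).2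
    exact (dist_triangle_right _ _ (f p)).trans (by linarith)
  have hsub : ball p (r / 2) ⊆ U := fun x hx => (hrf (ball_subset_ball (by linarith) hx)).1
  refine ⟨⟨2 / (r / 2), by positivity⟩, r / 2, half_pos hr, hsub, ?_⟩
  exact (convex_ball p (r / 2)).lipschitzOnWith_of_nnnorm_fderiv_le
    (fun x hx => hf.differentiableAt (hU.mem_nhds (hsub hx))) fderiv_le

-- `f'(p) - f'(q)` is the derivative at `q` of the increment `z ↦ f (z + (p - q)) - f z`, which is
-- small near `q`; the Cauchy estimate then bounds the derivative.
lemma continuousOn_fderiv_of_differentiableOn {f : E → F} {U : Set E} (hU : IsOpen U)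
    (hf : DifferentiableOn ℂ f U) : ContinuousOn (fderiv ℂ f) U := by
  intro q hq
  obtain ⟨K, r, hr, hrU, hK⟩ := exists_lipschitzOnWith_of_differentiableOn hU hf hq
  have hdiff : ∀ x ∈ ball q r, DifferentiableAt ℂ f x := fun x hx =>
    hf.differentiableAt (hU.mem_nhds (hrU hx))
  have dist_fderiv_le : ∀ p ∈ ball q (r / 2),
      dist (fderiv ℂ f p) (fderiv ℂ f q) ≤ 2 * (K * dist p q) / (r / 2) := by
    intro p hp
    have hshift : ∀ z ∈ ball q (r / 2), z + (p - q) ∈ ball q r := by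
      intro z hz
      rw [mem_ball, dist_eq_norm] at hz hp ⊢
      calc ‖z + (p - q) - q‖ = ‖(z - q) + (p - q)‖ := by congr 1; abel
        _ ≤ ‖z - q‖ + ‖p - q‖ := norm_add_le _ _
        _ < r := by linarith
    have hball : ball q (r / 2) ⊆ ball q r := ball_subset_ball (by linarith)
    have hincr : ∀ z ∈ ball q (r / 2), ‖f (z + (p - q)) - f z‖ ≤ K * dist p q := fun z hz => by
      simpa [dist_eq_norm] using hK.dist_le_mul _ (hshift z hz) _ (hball hz)
    have hq' : q ∈ ball q (r / 2) := mem_ball_self (half_pos hr)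
    have hderiv : HasFDerivAt (fun z => f (z + (p - q)) - f z) (fderiv ℂ f p - fderiv ℂ f q) q := by
      refine HasFDerivAt.sub ?_ (hdiff q (hball hq')).hasFDerivAt
      rw [hasFDerivAt_comp_add_right, add_sub_cancel]
      exact (hdiff p (hball hp)).hasFDerivAt
    rw [dist_eq_norm, ← hderiv.fderiv]
    refine Complex.norm_fderiv_le_div_of_mapsTo_ball (fun z hz => ?_) (fun z hz => ?_) (half_pos hr)
    · exact (((hdiff _ (hshift z hz)).comp z (differentiableAt_id.add_const _)).sub
        (hdiff z (hball hz))).differentiableWithinAt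
    · refine (dist_le_norm_add_norm _ _).trans ?_
      linarith [hincr z hz, hincr q hq']
  refine ContinuousAt.continuousWithinAt (tendsto_iff_dist_tendsto_zero.2 ?_)
  have hlim : Tendsto (fun p => 2 * (K * dist p q) / (r / 2)) (𝓝 q) (𝓝 0) := by
    have : Continuous fun p => 2 * (K * dist p q) / (r / 2) := by fun_prop
    simpa using this.tendsto q
  refine squeeze_zero' (Eventually.of_forall fun _ => dist_nonneg) ?_ hlim
  filter_upwards [ball_mem_nhds q (half_pos hr)] with p hp using dist_fderiv_le p hp

lemma exists_norm_fderiv_lt_on_thickening {f : E → F} {U : Set E} (hU : IsOpen U)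
    (hf : DifferentiableOn ℂ f U) {K : Set E} (hK : IsCompact K) (hKU : K ⊆ U) :
    ∃ C : ℝ, ∃ δ > 0, ∀ x ∈ thickening δ K, x ∈ U ∧ ‖fderiv ℂ f x‖ < C := by
  have hcont : ContinuousOn (fun x => ‖fderiv ℂ f x‖) U :=
    (continuousOn_fderiv_of_differentiableOn hU hf).norm
  obtain ⟨C, hC⟩ := (hK.image_of_continuousOn (hcont.mono hKU)).bddAbove
  have hKW : K ⊆ U ∩ (fun x => ‖fderiv ℂ f x‖) ⁻¹' Iio (C + 1) := fun x hx =>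
    ⟨hKU hx, (hC (mem_image_of_mem _ hx)).trans_lt (lt_add_one C)⟩
  obtain ⟨δ, hδ, hsub⟩ :=
    hK.exists_thickening_subset_open (hcont.isOpen_inter_preimage hU isOpen_Iio) hKW
  exact ⟨C + 1, δ, hδ, fun x hx => hsub hx⟩

lemma differentiableAt_intervalIntegral_comp_add {f : E → F} {U : Set E} (hU : IsOpen U)
    (hf : DifferentiableOn ℂ f U) {γ : ℝ → E} (hγ : Continuous γ) {a b : ℝ} {p : E}
    (hp : ∀ t ∈ uIcc a b, p + γ t ∈ U) :
    DifferentiableAt ℂ (fun x => ∫ t in a..b, f (x + γ t)) p := by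
  have hKU : (fun t => p + γ t) '' uIcc a b ⊆ U := image_subset_iff.2 hp
  obtain ⟨C, δ, hδ, hC⟩ := exists_norm_fderiv_lt_on_thickening hU hf
    (isCompact_uIcc.image (continuous_const.add hγ)) hKU
  have hmem : ∀ x ∈ ball p δ, ∀ t ∈ uIcc a b, x + γ t ∈ U ∧ ‖fderiv ℂ f (x + γ t)‖ < C := by
    intro x hx t ht
    refine hC _ (mem_thickening_iff.2 ⟨p + γ t, mem_image_of_mem _ ht, ?_⟩)
    rwa [dist_add_right]
  have hcont : ∀ x ∈ ball p δ, ContinuousOn (fun t => f (x + γ t)) (uIcc a b) := fun x hx =>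
    hf.continuousOn.comp (by fun_prop) fun t ht => (hmem x hx t ht).1
  have hcont' : ContinuousOn (fun t => fderiv ℂ f (p + γ t)) (uIcc a b) :=
    (continuousOn_fderiv_of_differentiableOn hU hf).comp (by fun_prop) hp
  refine (intervalIntegral.hasFDerivAt_integral_of_dominated_of_fderiv_le
    (F := fun x t => f (x + γ t)) (F' := fun x t => fderiv ℂ f (x + γ t)) (bound := fun _ => C)
    (ball_mem_nhds p hδ) ?_ (hcont p (mem_ball_self hδ)).intervalIntegrable
    hcont'.intervalIntegrable.aestronglyMeasurable_restrict_uIoc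
    (Eventually.of_forall fun t ht x hx => (hmem x hx t (uIoc_subset_uIcc ht)).2.le)
    intervalIntegrable_const
    (Eventually.of_forall fun t ht x hx => ?_)).differentiableAt
  · filter_upwards [ball_mem_nhds p hδ] with x hx
    exact (hcont x hx).intervalIntegrable.aestronglyMeasurable_restrict_uIoc
  · rw [hasFDerivAt_comp_add_right]
    exact (hf.differentiableAt (hU.mem_nhds (hmem x hx t (uIoc_subset_uIcc ht)).1)).hasFDerivAt

lemma differentiableAt_circleAverage_comp_add_smul {f : E → F} {U : Set E} (hU : IsOpen U)
    (hf : DifferentiableOn ℂ f U) {p v : E} {ρ : ℝ} (hp : ∀ w ∈ sphere (0 : ℂ) |ρ|, p + w • v ∈ U) :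
    DifferentiableAt ℂ (fun x => Real.circleAverage (fun w => f (x + w • v)) 0 ρ) p :=
  (differentiableAt_intervalIntegral_comp_add hU hf (γ := fun θ => circleMap 0 ρ θ • v)
    (by fun_prop) fun θ _ => hp _ (circleMap_mem_sphere' 0 ρ θ)).const_smul _

lemma circleAverage_eq_of_differentiableOn_diff_singleton [CompleteSpace F] {g : ℂ → F} {s : Set ℂ}
    {z c : ℂ} {R : ℝ} (hs : closedBall z R ⊆ s) (hc : c ∈ ball z R) (hcz : c ≠ z)
    (hg : DifferentiableOn ℂ g (s \ {c})) (hb : Bornology.IsBounded (g '' (s \ {c}))) :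
    Real.circleAverage g z R = g z := by
  have hR : 0 < R := dist_nonneg.trans_lt hc
  set h := Function.update g c (limUnder (𝓝[≠] c) g)
  have hs' : s ∈ 𝓝 c := mem_of_superset (isOpen_ball.mem_nhds hc) (ball_subset_closedBall.trans hs)
  have hd : DifferentiableOn ℂ h s :=
    Complex.differentiableOn_update_limUnder_of_bddAbove hs' hg <| by
      obtain ⟨C, hC⟩ := isBounded_iff_forall_norm_le.1 hb
      exact ⟨C, forall_mem_image.2 fun w hw => hC _ (mem_image_of_mem g hw)⟩
  have heq : ∀ w ≠ c, h w = g w := fun w hw => Function.update_of_ne hw _ _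
  have hsphere : EqOn g h (sphere z |R|) := fun w hw => by
    refine (heq w fun hwc => ?_).symm
    rw [hwc, abs_of_pos hR, mem_sphere] at hw
    exact (mem_ball.1 hc).ne hw
  rw [Real.circleAverage_congr_sphere hsphere, ← heq z hcz.symm]
  refine DiffContOnCl.circleAverage ?_
  rw [abs_of_pos hR]
  exact hd.diffContOnCl_ball hs

lemma dense_setOf_apply_ne_zero {ℓ : E →L[ℂ] ℂ} (hℓ : ℓ ≠ 0) : Dense {x | ℓ x ≠ 0} := by
  have hcompl : {x | ℓ x ≠ 0} = (LinearMap.ker (ℓ : E →ₗ[ℂ] ℂ) : Set E)ᶜ := rfl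
  rw [hcompl, ← interior_eq_empty_iff_dense_compl, ← not_nonempty_iff_eq_empty]
  intro hne
  have htop := Submodule.eq_top_of_nonempty_interior' _ hne
  exact hℓ (by ext x; exact LinearMap.congr_fun (LinearMap.ker_eq_top.1 htop) x)

lemma eqOn_extendFrom_of_dense {X Y : Type*} [TopologicalSpace X] [TopologicalSpace Y] [T2Space Y]
    {A N : Set X} (hA : Dense A) (hN : IsOpen N) {f g : X → Y} (hg : ContinuousOn g N)
    (hfg : EqOn f g (N ∩ A)) : EqOn (extendFrom A f) g N := fun x hx => by
  have hlim : Tendsto g (𝓝[A] x) (𝓝 (g x)) :=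
    (hg.continuousAt (hN.mem_nhds hx)).tendsto.mono_left nhdsWithin_le_nhds
  refine extendFrom_eq (hA x) (hlim.congr' ?_)
  filter_upwards [mem_nhdsWithin_of_mem_nhds (hN.mem_nhds hx), self_mem_nhdsWithin] with y hyN hyA
  exact (hfg ⟨hyN, hyA⟩).symm

lemma exists_forall_add_smul_mem {U : Set E} (hU : IsOpen U) {a : E} (ha : a ∈ U) (v : E) :
    ∃ r > 0, ∃ ρ > 0, ∀ x ∈ ball a r, ∀ w ∈ closedBall (0 : ℂ) ρ, x + w • v ∈ U := by
  have hopen : IsOpen {p : E × ℂ | p.1 + p.2 • v ∈ U} := hU.preimage (by fun_prop)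
  obtain ⟨r, hr, hrU⟩ := Metric.isOpen_iff.1 hopen (a, 0) (by simpa using ha)
  rw [← ball_prod_same] at hrU
  exact ⟨r, hr, r / 2, half_pos hr, fun x hx w hw =>
    hrU (mk_mem_prod hx (closedBall_subset_ball (half_lt_self hr) hw))⟩

-- The extension is the average over a small circle in a direction transverse to the hyperplane.
lemma exists_local_extension_of_apply_eq_zero [CompleteSpace F] {ℓ : E →L[ℂ] ℂ} (hℓ : ℓ ≠ 0)
    {U : Set E} (hU : IsOpen U) {f : E → F} (hf : DifferentiableOn ℂ f (U ∩ {x | ℓ x ≠ 0}))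
    (hb : Bornology.IsBounded (f '' (U ∩ {x | ℓ x ≠ 0}))) {a : E} (ha : a ∈ U) (hℓa : ℓ a = 0) :
    ∃ N : Set E, IsOpen N ∧ a ∈ N ∧
      ∃ g : E → F, DifferentiableOn ℂ g N ∧ EqOn f g (N ∩ {x | ℓ x ≠ 0}) := by
  obtain ⟨u, hu⟩ := DFunLike.ne_iff.1 hℓ
  obtain ⟨v, hv⟩ : ∃ v, ℓ v = 1 := ⟨(ℓ u)⁻¹ • u, by simpa using inv_mul_cancel₀ hu⟩
  obtain ⟨r, hr, ρ, hρ, hdisc⟩ := exists_forall_add_smul_mem hU ha v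
  have hW : IsOpen (U ∩ {x | ℓ x ≠ 0}) := hU.inter (isOpen_ne_fun ℓ.continuous continuous_const)
  have hℓline : ∀ x w, ℓ (x + w • v) = w - (-ℓ x) := fun x w => by simp [hv, add_comm]
  refine ⟨ball a r ∩ ℓ ⁻¹' ball 0 ρ, isOpen_ball.inter (isOpen_ball.preimage ℓ.continuous),
    ⟨mem_ball_self hr, by simpa [hℓa] using hρ⟩,
    fun x => Real.circleAverage (fun w => f (x + w • v)) 0 ρ, fun x hx => ?_, fun x hx => ?_⟩
  · refine (differentiableAt_circleAverage_comp_add_smul hW hf fun w hw => ?_)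
      |>.differentiableWithinAt
    rw [abs_of_pos hρ] at hw
    refine ⟨hdisc x hx.1 w (sphere_subset_closedBall hw), fun h => ?_⟩
    rw [hℓline, sub_eq_zero] at h
    have hx2 : ‖ℓ x‖ < ρ := mem_ball_zero_iff.1 hx.2
    rw [mem_sphere_zero_iff_norm, h, norm_neg] at hw
    exact hx2.ne hw
  · have hmaps : MapsTo (fun w : ℂ => x + w • v) ({w | x + w • v ∈ U} \ {-ℓ x})
        (U ∩ {x | ℓ x ≠ 0}) := fun w hw =>
      ⟨hw.1, (hℓline x w).trans_ne (sub_ne_zero.2 hw.2)⟩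
    have hmean := circleAverage_eq_of_differentiableOn_diff_singleton
      (g := fun w => f (x + w • v)) (s := {w | x + w • v ∈ U}) (c := -ℓ x) (hdisc x hx.1.1)
      (by simpa using hx.1.2) (neg_ne_zero.2 hx.2)
      (hf.comp (by fun_prop) hmaps)
      (hb.subset (image_subset_iff.2 fun w hw => mem_image_of_mem f (hmaps hw)))
    simpa using hmean.symm

theorem differentiableOn_extendFrom_of_isBounded [CompleteSpace F] {ℓ : E →L[ℂ] ℂ} (hℓ : ℓ ≠ 0)
    {U : Set E} (hU : IsOpen U) {f : E → F} (hf : DifferentiableOn ℂ f (U ∩ {x | ℓ x ≠ 0}))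
    (hb : Bornology.IsBounded (f '' (U ∩ {x | ℓ x ≠ 0}))) :
    DifferentiableOn ℂ (extendFrom {x | ℓ x ≠ 0} f) U := by
  intro a ha
  obtain ⟨N, hN, haN, g, hg, hfg⟩ : ∃ N : Set E, IsOpen N ∧ a ∈ N ∧
      ∃ g : E → F, DifferentiableOn ℂ g N ∧ EqOn f g (N ∩ {x | ℓ x ≠ 0}) := by
    by_cases hℓa : ℓ a = 0
    · exact exists_local_extension_of_apply_eq_zero hℓ hU hf hb ha hℓa
    · exact ⟨_, hU.inter (isOpen_ne_fun ℓ.continuous continuous_const), ⟨ha, hℓa⟩, f, hf,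
        fun _ _ => rfl⟩
  have heq := eqOn_extendFrom_of_dense (dense_setOf_apply_ne_zero hℓ) hN hg.continuousOn hfg
  exact ((hg.congr heq).differentiableAt (hN.mem_nhds haN)).differentiableWithinAt

end Holomorphic

section Biholomorphism

variable {E F G : Type*} [NormedAddCommGroup E] [NormedSpace ℂ E]
  [NormedAddCommGroup F] [NormedSpace ℂ F] [NormedAddCommGroup G] [NormedSpace ℂ G]

/-- `f` maps `U` biholomorphically onto `V`, with inverse `g`. The sets are not required to be open,
so that slices of a domain by linear subspaces are covered as well. -/
structure IsBiholomorphism (f : E → F) (g : F → E) (U : Set E) (V : Set F) : Prop where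
  differentiableOn : DifferentiableOn ℂ f U
  differentiableOn_inv : DifferentiableOn ℂ g V
  mapsTo : MapsTo f U V
  mapsTo_inv : MapsTo g V U
  leftInvOn : LeftInvOn g f U
  rightInvOn : RightInvOn g f V

namespace IsBiholomorphism

lemma symm {f : E → F} {g : F → E} {U : Set E} {V : Set F} (h : IsBiholomorphism f g U V) :
    IsBiholomorphism g f V U :=
  ⟨h.differentiableOn_inv, h.differentiableOn, h.mapsTo_inv, h.mapsTo, h.rightInvOn, h.leftInvOn⟩

lemma trans {f : E → F} {g : F → E} {f' : F → G} {g' : G → F} {U : Set E} {V : Set F} {W : Set G}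
    (h : IsBiholomorphism f g U V) (h' : IsBiholomorphism f' g' V W) :
    IsBiholomorphism (f' ∘ f) (g ∘ g') U W where
  differentiableOn := h'.differentiableOn.comp h.differentiableOn h.mapsTo
  differentiableOn_inv := h.differentiableOn_inv.comp h'.differentiableOn_inv h'.mapsTo_inv
  mapsTo := h'.mapsTo.comp h.mapsTo
  mapsTo_inv := h.mapsTo_inv.comp h'.mapsTo_inv
  leftInvOn := h.leftInvOn.comp h'.leftInvOn h.mapsTo
  rightInvOn := h.rightInvOn.comp h'.rightInvOn h'.mapsTo_inv

lemma of_continuousLinearEquiv (e : E ≃L[ℂ] F) (V : Set F) :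
    IsBiholomorphism e e.symm (e ⁻¹' V) V where
  differentiableOn := e.differentiable.differentiableOn
  differentiableOn_inv := e.symm.differentiable.differentiableOn
  mapsTo := mapsTo_preimage e V
  mapsTo_inv := fun y hy => by simpa using hy
  leftInvOn := fun x _ => e.symm_apply_apply x
  rightInvOn := fun y _ => e.apply_symm_apply y

end IsBiholomorphism

lemma mapsTo_ball_of_dense {f : E → F} {U A : Set E} {r : ℝ} (hU : IsOpen U)
    (hUc : IsPreconnected U) (hf : DifferentiableOn ℂ f U) (hA : Dense A)
    (hfA : MapsTo f (U ∩ A) (ball 0 r)) : MapsTo f U (ball 0 r) := by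
  have norm_le : ∀ x ∈ U, ‖f x‖ ≤ r := fun x hx => by
    have hfx : f x ∈ closure (ball 0 r) :=
      ((hf.continuousOn x hx).mono inter_subset_left).mem_closure
        (hA.open_subset_closure_inter hU hx) hfA
    exact mem_closedBall_zero_iff.1 (closure_ball_subset_closedBall hfx)
  intro c hc
  refine mem_ball_zero_iff.2 ((norm_le c hc).lt_of_ne fun hcr => ?_)
  have hmax : IsMaxOn (norm ∘ f) U c := fun x hx => (norm_le x hx).trans_eq hcr.symm
  obtain ⟨x, hxU, hxA⟩ := hA.inter_open_nonempty U hU ⟨c, hc⟩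
  have hx : ‖f x‖ = ‖f c‖ := Complex.norm_eqOn_of_isPreconnected_of_isMaxOn hUc hU hf hc hmax hxU
  exact (mem_ball_zero_iff.1 (hfA ⟨hxU, hxA⟩)).ne (hx.trans hcr)

namespace IsBiholomorphism

section Slice

variable {ℓ : E →L[ℂ] ℂ} {m : F →L[ℂ] ℂ} {f : E → F} {g : F → E} {r s : ℝ}
  (h : IsBiholomorphism f g (ball 0 r ∩ {x | ℓ x ≠ 0}) (ball 0 s ∩ {y | m y ≠ 0})) (hℓ : ℓ ≠ 0)

include h hℓ

lemma eqOn_extendFrom : EqOn (extendFrom {x | ℓ x ≠ 0} f) f (ball 0 r ∩ {x | ℓ x ≠ 0}) :=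
  eqOn_extendFrom_of_dense (dense_setOf_apply_ne_zero hℓ)
    (isOpen_ball.inter (isOpen_ne_fun ℓ.continuous continuous_const))
    h.differentiableOn.continuousOn fun _ _ => rfl

lemma differentiableOn_extendFrom [CompleteSpace F] :
    DifferentiableOn ℂ (extendFrom {x | ℓ x ≠ 0} f) (ball 0 r) :=
  differentiableOn_extendFrom_of_isBounded hℓ isOpen_ball h.differentiableOn <|
    isBounded_ball.subset (h.mapsTo.image_subset.trans inter_subset_left)

lemma mapsTo_extendFrom [CompleteSpace F] :
    MapsTo (extendFrom {x | ℓ x ≠ 0} f) (ball 0 r) (ball 0 s) := by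
  refine mapsTo_ball_of_dense isOpen_ball (convex_ball 0 r).isPreconnected
    (h.differentiableOn_extendFrom hℓ) (dense_setOf_apply_ne_zero hℓ) fun x hx => ?_
  rw [h.eqOn_extendFrom hℓ hx]
  exact (h.mapsTo hx).1

lemma leftInvOn_extendFrom [CompleteSpace E] [CompleteSpace F] (hm : m ≠ 0) :
    LeftInvOn (extendFrom {y | m y ≠ 0} g) (extendFrom {x | ℓ x ≠ 0} f) (ball 0 r) := by
  have heq : EqOn (extendFrom {y | m y ≠ 0} g ∘ extendFrom {x | ℓ x ≠ 0} f) id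
      (ball 0 r ∩ {x | ℓ x ≠ 0}) := fun x hx => by
    rw [Function.comp_apply, h.eqOn_extendFrom hℓ hx, h.symm.eqOn_extendFrom hm (h.mapsTo hx),
      h.leftInvOn hx, id]
  exact heq.of_subset_closure
    ((h.symm.differentiableOn_extendFrom hm).continuousOn.comp
      (h.differentiableOn_extendFrom hℓ).continuousOn (h.mapsTo_extendFrom hℓ))
    continuousOn_id inter_subset_left
    ((dense_setOf_apply_ne_zero hℓ).open_subset_closure_inter isOpen_ball)

lemma mapsTo_extendFrom_slice [CompleteSpace E] [CompleteSpace F] (hm : m ≠ 0) :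
    MapsTo (extendFrom {x | ℓ x ≠ 0} f) (ball 0 r ∩ {x | ℓ x = 0}) (ball 0 s ∩ {y | m y = 0}) := by
  rintro x ⟨hx, hℓx⟩
  refine ⟨h.mapsTo_extendFrom hℓ hx, by_contra fun hmx => ?_⟩
  have hx' : g (extendFrom {x | ℓ x ≠ 0} f x) = x := by
    rw [← h.symm.eqOn_extendFrom hm ⟨h.mapsTo_extendFrom hℓ hx, hmx⟩,
      h.leftInvOn_extendFrom hℓ hm hx]
  exact (h.mapsTo_inv ⟨h.mapsTo_extendFrom hℓ hx, hmx⟩).2 (hx'.symm ▸ hℓx)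

theorem extendFrom_slice [CompleteSpace E] [CompleteSpace F] (hm : m ≠ 0) :
    IsBiholomorphism (extendFrom {x | ℓ x ≠ 0} f) (extendFrom {y | m y ≠ 0} g)
      (ball 0 r ∩ {x | ℓ x = 0}) (ball 0 s ∩ {y | m y = 0}) where
  differentiableOn := (h.differentiableOn_extendFrom hℓ).mono inter_subset_left
  differentiableOn_inv := (h.symm.differentiableOn_extendFrom hm).mono inter_subset_left
  mapsTo := h.mapsTo_extendFrom_slice hℓ hm
  mapsTo_inv := h.symm.mapsTo_extendFrom_slice hm hℓ
  leftInvOn := (h.leftInvOn_extendFrom hℓ hm).mono inter_subset_left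
  rightInvOn := (h.symm.leftInvOn_extendFrom hm hℓ).mono inter_subset_left

end Slice

lemma fderiv_inv_comp_fderiv {f : E → F} {g : F → E} {U : Set E} {V : Set F}
    (h : IsBiholomorphism f g U V) (hU : IsOpen U) (hV : IsOpen V) {x : E} (hx : x ∈ U) :
    fderiv ℂ g (f x) ∘L fderiv ℂ f x = .id ℂ E := by
  have hf := (h.differentiableOn.differentiableAt (hU.mem_nhds hx)).hasFDerivAt
  have hg := (h.differentiableOn_inv.differentiableAt (hV.mem_nhds (h.mapsTo hx))).hasFDerivAt
  refine (hg.comp x hf).unique ((hasFDerivAt_id x).congr_of_eventuallyEq ?_)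
  filter_upwards [hU.mem_nhds hx] with y hy using h.leftInvOn hy

-- By the Schwarz lemma the mutually inverse derivatives of `f` and `g` at `0` are contractions.
theorem nonempty_linearIsometryEquiv_of_map_zero {f : E → F} {g : F → E}
    (h : IsBiholomorphism f g (ball 0 1) (ball 0 1)) (hf0 : f 0 = 0) :
    Nonempty (E ≃ₗᵢ[ℂ] F) := by
  have h0 : (0 : E) ∈ ball 0 1 := mem_ball_self one_pos
  have hg0 : g 0 = 0 := by rw [← hf0, h.leftInvOn h0]
  have norm_f'_le : ‖fderiv ℂ f 0‖ ≤ 1 :=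
    Complex.norm_fderiv_le_one_of_mapsTo_ball h.differentiableOn
      (by rw [hf0]; exact h.mapsTo.mono_right ball_subset_closedBall) one_pos
  have norm_g'_le : ‖fderiv ℂ g 0‖ ≤ 1 :=
    Complex.norm_fderiv_le_one_of_mapsTo_ball h.differentiableOn_inv
      (by rw [hg0]; exact h.mapsTo_inv.mono_right ball_subset_closedBall) one_pos
  have hgf : ∀ x, fderiv ℂ g 0 (fderiv ℂ f 0 x) = x := fun x => by
    have hcomp := h.fderiv_inv_comp_fderiv isOpen_ball isOpen_ball h0
    rw [hf0] at hcomp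
    exact DFunLike.congr_fun hcomp x
  have hfg : ∀ y, fderiv ℂ f 0 (fderiv ℂ g 0 y) = y := fun y => by
    have hcomp := h.symm.fderiv_inv_comp_fderiv isOpen_ball isOpen_ball (mem_ball_self one_pos)
    rw [hg0] at hcomp
    exact DFunLike.congr_fun hcomp y
  refine ⟨⟨LinearEquiv.ofLinearMap (fderiv ℂ f 0) (fderiv ℂ g 0) (LinearMap.ext hfg)
    (LinearMap.ext hgf), fun x => le_antisymm ?_ ?_⟩⟩
  · exact (fderiv ℂ f 0).le_of_opNorm_le_of_le norm_f'_le le_rfl |>.trans_eq (one_mul _)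
  · calc ‖x‖ = ‖fderiv ℂ g 0 (fderiv ℂ f 0 x)‖ := by rw [hgf]
      _ ≤ 1 * ‖fderiv ℂ f 0 x‖ := (fderiv ℂ g 0).le_of_opNorm_le norm_g'_le _
      _ = ‖fderiv ℂ f 0 x‖ := one_mul _

end IsBiholomorphism

end Biholomorphism

section Moebius

/-- The Möbius transformation `w ↦ (w - a) / (1 - ā w)`, which for `‖a‖ < 1` is the automorphism of
the unit disc moving `a` to `0`. -/
noncomputable def discMoebius (a w : ℂ) : ℂ := (w - a) / (1 - conj a * w)

variable {a w : ℂ}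

lemma one_sub_conj_mul_ne_zero (ha : ‖a‖ < 1) (hw : ‖w‖ < 1) : 1 - conj a * w ≠ 0 := by
  refine sub_ne_zero.2 fun h => (mul_lt_one_of_nonneg_of_lt_one_left (norm_nonneg a) ha hw.le).ne ?_
  rw [← Complex.norm_conj a, ← norm_mul, ← h, norm_one]

lemma one_sub_norm_discMoebius_sq (ha : ‖a‖ < 1) (hw : ‖w‖ < 1) :
    1 - ‖discMoebius a w‖ ^ 2 = (1 - ‖a‖ ^ 2) * (1 - ‖w‖ ^ 2) / ‖1 - conj a * w‖ ^ 2 := by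
  have hden : ‖1 - conj a * w‖ ^ 2 ≠ 0 :=
    pow_ne_zero 2 (norm_ne_zero_iff.2 (one_sub_conj_mul_ne_zero ha hw))
  rw [discMoebius, norm_div, div_pow, eq_div_iff hden, sub_mul, div_mul_cancel₀ _ hden]
  simp only [Complex.sq_norm, Complex.normSq_apply, Complex.sub_re, Complex.sub_im, Complex.mul_re,
    Complex.mul_im, Complex.conj_re, Complex.conj_im, Complex.one_re, Complex.one_im]
  ring

lemma norm_discMoebius_lt_one (ha : ‖a‖ < 1) (hw : ‖w‖ < 1) : ‖discMoebius a w‖ < 1 := by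
  have ha' : 0 < 1 - ‖a‖ ^ 2 := by nlinarith [norm_nonneg a]
  have hw' : 0 < 1 - ‖w‖ ^ 2 := by nlinarith [norm_nonneg w]
  have hden := norm_pos_iff.2 (one_sub_conj_mul_ne_zero ha hw)
  have hpos : 0 < 1 - ‖discMoebius a w‖ ^ 2 := by
    rw [one_sub_norm_discMoebius_sq ha hw]
    positivity
  exact (sq_lt_one_iff₀ (norm_nonneg _)).1 (sub_pos.1 hpos)

lemma discMoebius_neg_discMoebius (ha : ‖a‖ < 1) (hw : ‖w‖ < 1) :
    discMoebius (-a) (discMoebius a w) = w := by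
  have hden := one_sub_conj_mul_ne_zero ha hw
  have hden' := one_sub_conj_mul_ne_zero (a := -a) (by simpa using ha)
    (norm_discMoebius_lt_one ha hw)
  rw [discMoebius, div_eq_iff hden']
  have hmul : discMoebius a w * (1 - conj a * w) = w - a := div_mul_cancel₀ _ hden
  rw [map_neg]
  linear_combination hmul

lemma differentiableOn_discMoebius (ha : ‖a‖ < 1) :
    DifferentiableOn ℂ (discMoebius a) (ball 0 1) := by
  refine DifferentiableOn.div (by fun_prop) (by fun_prop) fun w hw => ?_
  exact one_sub_conj_mul_ne_zero ha (mem_ball_zero_iff.1 hw)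

lemma isBiholomorphism_discMoebius (ha : ‖a‖ < 1) :
    IsBiholomorphism (discMoebius a) (discMoebius (-a)) (ball 0 1) (ball 0 1) := by
  have hna : ‖-a‖ < 1 := by rwa [norm_neg]
  refine ⟨differentiableOn_discMoebius ha, differentiableOn_discMoebius hna, fun w hw => ?_,
    fun w hw => ?_, fun w hw => ?_, fun w hw => ?_⟩ <;> rw [mem_ball_zero_iff] at *
  · exact norm_discMoebius_lt_one ha hw
  · exact norm_discMoebius_lt_one hna hw
  · exact discMoebius_neg_discMoebius ha hw
  · simpa using discMoebius_neg_discMoebius hna hw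

end Moebius

section Polydisc

variable {ι : Type*} [Fintype ι]

lemma IsBiholomorphism.pi_ball {f g : ι → ℂ → ℂ} {r s : ℝ} (hr : 0 < r) (hs : 0 < s)
    (h : ∀ i, IsBiholomorphism (f i) (g i) (ball 0 r) (ball 0 s)) :
    IsBiholomorphism (fun z i => f i (z i)) (fun z i => g i (z i)) (ball (0 : ι → ℂ) r)
      (ball (0 : ι → ℂ) s) := by
  have hmem : ∀ {t : ℝ}, 0 < t → ∀ {z : ι → ℂ}, z ∈ ball 0 t ↔ ∀ i, z i ∈ ball 0 t := by
    intro t ht z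
    simp only [mem_ball_zero_iff, pi_norm_lt_iff ht]
  refine ⟨?_, ?_, fun z hz => ?_, fun z hz => ?_, fun z hz => ?_, fun z hz => ?_⟩
  · exact differentiableOn_pi.2 fun i =>
      (h i).differentiableOn.comp (by fun_prop) fun z hz => (hmem hr).1 hz i
  · exact differentiableOn_pi.2 fun i =>
      (h i).differentiableOn_inv.comp (by fun_prop) fun z hz => (hmem hs).1 hz i
  · exact (hmem hs).2 fun i => (h i).mapsTo ((hmem hr).1 hz i)
  · exact (hmem hr).2 fun i => (h i).mapsTo_inv ((hmem hs).1 hz i)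
  · exact funext fun i => (h i).leftInvOn ((hmem hr).1 hz i)
  · exact funext fun i => (h i).rightInvOn ((hmem hs).1 hz i)

lemma isBiholomorphism_pi_discMoebius {a : ι → ℂ} (ha : ‖a‖ < 1) :
    IsBiholomorphism (fun z i => discMoebius (a i) (z i)) (fun z i => discMoebius (-a i) (z i))
      (ball (0 : ι → ℂ) 1) (ball (0 : ι → ℂ) 1) :=
  .pi_ball one_pos one_pos fun i => isBiholomorphism_discMoebius ((norm_le_pi_norm a i).trans_lt ha)

theorem IsBiholomorphism.nonempty_linearIsometryEquiv_pi {E : Type*} [NormedAddCommGroup E]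
    [NormedSpace ℂ E] {f : E → ι → ℂ} {g : (ι → ℂ) → E}
    (h : IsBiholomorphism f g (ball 0 1) (ball 0 1)) : Nonempty (E ≃ₗᵢ[ℂ] (ι → ℂ)) := by
  have hf0 : ‖f 0‖ < 1 := mem_ball_zero_iff.1 (h.mapsTo (mem_ball_self one_pos))
  refine (h.trans (isBiholomorphism_pi_discMoebius hf0)).nonempty_linearIsometryEquiv_of_map_zero ?_
  ext i
  simp [discMoebius]

end Polydisc

section StrictConvex

variable {H : Type*} [NormedAddCommGroup H] [NormedSpace ℂ H] [StrictConvexSpace ℝ H]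

-- After scaling `y` so that `φ x = φ y`, the norm of `x + y` is `‖x‖ + ‖y‖`.
lemma not_linearIndependent_of_norm_apply_eq {φ : H →ₗ[ℂ] ℂ} (hφ : ∀ z, ‖φ z‖ ≤ ‖z‖) {x y : H}
    (hx : ‖φ x‖ = ‖x‖) (hy : ‖φ y‖ = ‖y‖) : ¬ LinearIndependent ℂ ![x, y] := by
  intro hxy
  have hx0 : x ≠ 0 := hxy.ne_zero 0
  have hy0 : y ≠ 0 := hxy.ne_zero 1
  have hφx : φ x ≠ 0 := norm_ne_zero_iff.1 (hx ▸ norm_ne_zero_iff.2 hx0)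
  have hφy : φ y ≠ 0 := norm_ne_zero_iff.1 (hy ▸ norm_ne_zero_iff.2 hy0)
  set c := φ x / φ y with hc
  have hφc : φ (c • y) = φ x := by rw [map_smul, smul_eq_mul, hc, div_mul_cancel₀ _ hφy]
  have norm_cy : ‖c • y‖ = ‖x‖ := by rw [norm_smul, ← hy, ← norm_smul, ← map_smul, hφc, hx]
  have norm_add : ‖x + c • y‖ = ‖x‖ + ‖c • y‖ := by
    refine (norm_add_le _ _).antisymm ?_
    calc ‖x‖ + ‖c • y‖ = ‖φ x + φ x‖ := by rw [norm_cy, ← hx, ← two_mul, ← two_mul]; simp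
      _ = ‖φ (x + c • y)‖ := by rw [map_add, hφc]
      _ ≤ ‖x + c • y‖ := hφ _
  obtain ⟨s, t, hs, -, hst⟩ := (sameRay_iff_norm_add.2 norm_add).exists_pos hx0
    (smul_ne_zero (div_ne_zero hφx hφy) hy0)
  have hdep : (s : ℂ) • x + (-(t * c)) • y = 0 := by
    rw [neg_smul, mul_smul, ← sub_eq_add_neg, sub_eq_zero]
    exact_mod_cast hst
  exact hs.ne' (by exact_mod_cast (LinearIndependent.pair_iff.1 hxy _ _ hdep).1)

-- Two of the pairwise independent vectors `x + n • y`, `n ∈ ℕ`, attain their norms at the same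
-- coordinate.
theorem isEmpty_linearIsometry_pi_of_one_lt_rank {ι : Type*} [Fintype ι]
    (hH : 1 < Module.rank ℂ H) : IsEmpty (H →ₗᵢ[ℂ] (ι → ℂ)) := by
  refine ⟨fun L => ?_⟩
  obtain ⟨x, hx⟩ := rank_pos_iff_exists_ne_zero.1 (zero_lt_one.trans hH)
  obtain ⟨y, hxy⟩ := exists_linearIndependent_pair_of_one_lt_rank hH hx
  have : Nonempty ι := by
    by_contra hι
    rw [not_nonempty_iff] at hι
    exact hx (L.injective (Subsingleton.elim _ _))
  have hcoord : ∀ z, ∃ i, ‖L z i‖ = ‖z‖ := fun z => by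
    obtain ⟨i, hi⟩ := Finite.exists_max fun i => ‖L z i‖
    refine ⟨i, ?_⟩
    rw [← L.norm_map z]
    exact (norm_le_pi_norm _ i).antisymm ((pi_norm_le_iff_of_nonneg (norm_nonneg _)).2 hi)
  choose i hi using hcoord
  let v : ℕ → H := fun n => (1 : ℂ) • x + (n : ℂ) • y
  obtain ⟨n, k, hnk, hik⟩ := Finite.exists_ne_map_eq_of_infinite fun n => i (v n)
  have hv : LinearIndependent ℂ ![v n, v k] := by
    rw [LinearIndependent.pair_add_smul_add_smul_iff]
    exact ⟨hxy, by simpa using hnk.symm⟩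
  exact not_linearIndependent_of_norm_apply_eq (φ := LinearMap.proj (i (v n)) ∘ₗ L.toLinearMap)
    (fun z => (norm_le_pi_norm (L z) _).trans_eq (L.norm_map z)) (hi (v n)) (hik ▸ hi (v k)) hv

end StrictConvex

section Coordinates

lemma IsBiholomorphism.of_slice {E F : Type*} [NormedAddCommGroup E] [NormedSpace ℂ E]
    [NormedAddCommGroup F] [NormedSpace ℂ F] {j : F →L[ℂ] E} {p : E →L[ℂ] F} {ℓ : E →L[ℂ] ℂ}
    (norm_j : ∀ x, ‖j x‖ = ‖x‖) (hℓj : ∀ x, ℓ (j x) = 0) (hpj : ∀ x, p (j x) = x)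
    (hjp : ∀ y, ℓ y = 0 → j (p y) = y) (r : ℝ) :
    IsBiholomorphism j p (ball 0 r) (ball 0 r ∩ {y | ℓ y = 0}) where
  differentiableOn := j.differentiable.differentiableOn
  differentiableOn_inv := p.differentiable.differentiableOn
  mapsTo x hx := ⟨by simpa [norm_j] using hx, hℓj x⟩
  mapsTo_inv y hy := by
    have hnorm : ‖p y‖ = ‖y‖ := by rw [← norm_j, hjp y hy.2]
    simpa [hnorm] using hy.1
  leftInvOn x _ := hpj x
  rightInvOn y hy := hjp y hy.2

/-- The space `ℂ²` with the Euclidean norm, whose unit ball is `𝔹`. -/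
abbrev EuclideanPlane := WithLp 2 (ℂ × ℂ)

/-- The linear identification of `ℂ² × ℂ × ℂ`, whose unit ball is `𝔹 × Δ × Δ` when `ℂ²` is given
the Euclidean norm, with the ambient space of `domD1` and `domD2`. -/
noncomputable def euclideanCoordEquiv : (EuclideanPlane × ℂ × ℂ) ≃L[ℂ] (ℂ × ℂ) × ℂ × ℂ :=
  (WithLp.prodContinuousLinearEquiv 2 ℂ ℂ ℂ).prodCongr (.refl ℂ (ℂ × ℂ))

/-- The coordinate on `ℂ² × ℂ × ℂ` that is nonzero on `domD1`. -/
noncomputable def coordD1 : (EuclideanPlane × ℂ × ℂ) →L[ℂ] ℂ :=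
  .fst ℂ ℂ ℂ ∘L .snd ℂ EuclideanPlane (ℂ × ℂ)

/-- The coordinate on `ℂ² × ℂ × ℂ` that is nonzero on `domD2`. -/
noncomputable def coordD2 : (EuclideanPlane × ℂ × ℂ) →L[ℂ] ℂ :=
  WithLp.fstL 2 ℂ ℂ ℂ ∘L .fst ℂ EuclideanPlane (ℂ × ℂ)

lemma coordD1_ne_zero : coordD1 ≠ 0 :=
  fun h => one_ne_zero (DFunLike.congr_fun h (0, 1, 0))

lemma coordD2_ne_zero : coordD2 ≠ 0 :=
  fun h => one_ne_zero (DFunLike.congr_fun h (WithLp.toLp 2 (1, 0), 0, 0))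

lemma mem_ball_euclideanPlane_prod_iff {z : EuclideanPlane × ℂ × ℂ} :
    z ∈ ball 0 1 ↔ ‖z.1.fst‖ ^ 2 + ‖z.1.snd‖ ^ 2 < 1 ∧ ‖z.2.1‖ < 1 ∧ ‖z.2.2‖ < 1 := by
  rw [mem_ball_zero_iff, Prod.norm_def, Prod.norm_def, max_lt_iff, max_lt_iff,
    ← sq_lt_one_iff₀ (norm_nonneg z.1), WithLp.prod_norm_sq_eq_of_L2]

lemma euclideanCoordEquiv_preimage_domD1 :
    euclideanCoordEquiv ⁻¹' domD1 = ball 0 1 ∩ {z | coordD1 z ≠ 0} := by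
  ext z
  rw [mem_inter_iff, mem_ball_euclideanPlane_prod_iff]
  change (_ ∧ (0 < ‖z.2.1‖ ∧ _) ∧ _) ↔ _ ∧ z.2.1 ≠ 0
  rw [norm_pos_iff]
  tauto

lemma euclideanCoordEquiv_preimage_domD2 :
    euclideanCoordEquiv ⁻¹' domD2 = ball 0 1 ∩ {z | coordD2 z ≠ 0} := by
  ext z
  rw [mem_inter_iff, mem_ball_euclideanPlane_prod_iff]
  change ((_ ∧ z.1.fst ≠ 0) ∧ _) ↔ _ ∧ z.1.fst ≠ 0
  tauto

lemma exists_isBiholomorphism_slice_coordD1 :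
    ∃ j p, IsBiholomorphism j p (ball (0 : EuclideanPlane × ℂ) 1)
      (ball 0 1 ∩ {z | coordD1 z = 0}) := by
  refine ⟨_, _, .of_slice
    (j := (ContinuousLinearMap.fst ℂ EuclideanPlane ℂ).prod (.prod 0 (.snd ℂ EuclideanPlane ℂ)))
    (p := (ContinuousLinearMap.fst ℂ EuclideanPlane (ℂ × ℂ)).prod
      (.snd ℂ ℂ ℂ ∘L .snd ℂ EuclideanPlane (ℂ × ℂ)))
    (fun x => ?_) (fun x => rfl) (fun x => rfl) (fun y hy => ?_) 1⟩
  · simp [Prod.norm_def]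
  · exact Prod.ext rfl (Prod.ext hy.symm rfl)

lemma pi_norm_fin_three (x : Fin 3 → ℂ) : ‖x‖ = max ‖x 0‖ (max ‖x 1‖ ‖x 2‖) :=
  eq_of_forall_ge_iff fun c => by
    rw [pi_norm_le_iff_of_nonempty, Fin.forall_fin_succ, Fin.forall_fin_two, max_le_iff, max_le_iff]
    rfl

lemma exists_isBiholomorphism_slice_coordD2 :
    ∃ j p, IsBiholomorphism j p (ball (0 : Fin 3 → ℂ) 1) (ball 0 1 ∩ {z | coordD2 z = 0}) := by
  refine ⟨_, _, .of_slice
    (j := ((WithLp.prodContinuousLinearEquiv 2 ℂ ℂ ℂ).symm.toContinuousLinearMap ∘L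
      .prod 0 (.proj 0)).prod (.prod (.proj 1) (.proj 2)))
    (p := .pi ![WithLp.sndL 2 ℂ ℂ ℂ ∘L .fst ℂ EuclideanPlane (ℂ × ℂ),
      .fst ℂ ℂ ℂ ∘L .snd ℂ EuclideanPlane (ℂ × ℂ),
      .snd ℂ ℂ ℂ ∘L .snd ℂ EuclideanPlane (ℂ × ℂ)])
    (fun x => ?_) (fun x => rfl) (fun x => ?_) (fun y hy => ?_) 1⟩
  · change max ‖WithLp.toLp 2 ((0 : ℂ), x 0)‖ (max ‖x 1‖ ‖x 2‖) = ‖x‖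
    rw [WithLp.norm_toLp_snd, pi_norm_fin_three]
  · ext i
    fin_cases i <;> rfl
  · exact Prod.ext (WithLp.ofLp_injective 2 (Prod.ext hy.symm rfl)) rfl

lemma one_lt_rank_euclideanPlane : 1 < Module.rank ℂ EuclideanPlane := by
  have hfinrank : Module.finrank ℂ EuclideanPlane = 2 := by
    rw [(WithLp.linearEquiv 2 ℂ (ℂ × ℂ)).finrank_eq, Module.finrank_prod, Module.finrank_self]
  rw [← Module.finrank_eq_rank, hfinrank]
  exact Nat.one_lt_cast.2 one_lt_two

end Coordinates

/-- the domains `D₁ = 𝔹 × Δ* × Δ` and `D₂ = 𝔹' × Δ × Δ` in `ℂ⁴` are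
not biholomorphically equivalent. -/
theorem domD1_not_biholomorphic_domD2 :
    ¬ ∃ F G : ((ℂ × ℂ) × ℂ × ℂ) → ((ℂ × ℂ) × ℂ × ℂ),
      DifferentiableOn ℂ F domD1 ∧ DifferentiableOn ℂ G domD2 ∧
      Set.MapsTo F domD1 domD2 ∧ Set.MapsTo G domD2 domD1 ∧
      (∀ z ∈ domD1, G (F z) = z) ∧ (∀ w ∈ domD2, F (G w) = w) := by
  rintro ⟨F, G, hF, hG, hFm, hGm, hGF, hFG⟩
  have hFG' : IsBiholomorphism F G domD1 domD2 := ⟨hF, hG, hFm, hGm, hGF, hFG⟩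
  have hball := ((IsBiholomorphism.of_continuousLinearEquiv euclideanCoordEquiv domD1).trans
    hFG').trans (IsBiholomorphism.of_continuousLinearEquiv euclideanCoordEquiv domD2).symm
  rw [euclideanCoordEquiv_preimage_domD1, euclideanCoordEquiv_preimage_domD2] at hball
  have hslice := hball.extendFrom_slice coordD1_ne_zero coordD2_ne_zero
  obtain ⟨j₁, p₁, hj₁⟩ := exists_isBiholomorphism_slice_coordD1
  obtain ⟨j₂, p₂, hj₂⟩ := exists_isBiholomorphism_slice_coordD2
  obtain ⟨L⟩ := ((hj₁.trans hslice).trans hj₂.symm).nonempty_linearIsometryEquiv_pi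
  exact (isEmpty_linearIsometry_pi_of_one_lt_rank one_lt_rank_euclideanPlane).false
    (L.toLinearIsometry.comp (LinearIsometry.inl ℂ EuclideanPlane ℂ))
end
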